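/- Let N ≥ 3 be odd. Let u₁ ∈ C_c^∞(ℝ^N) with supp u₁ ⊆ {|x| ≤ 1}, and let u : ℝ × ℝ^N → ℝ be a smooth solution of the linear wave equation ∂_t²u = Δ_x u with u(0,·) = 0 and ∂_t u(0,·) = u₁. Define Ext(t) = (1/2)∫_{|x| ≥ |t|} (|∇_x u(t,x)|² + (∂_t u(t,x))²) dx. Then Ext(t) → (1/4)∫_{ℝ^N}u₁² dx as t → +∞ and also as t → −∞. -/

import Mathlib

open MeasureTheory Metric Filter Set

noncomputable section

/-- The ground state `W(x) = (1 + |x|²/(N(N-2)))^(-(N-2)/2)`. -/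
def W (N : ℕ) (x : EuclideanSpace ℝ (Fin N)) : ℝ :=
  (1 + ‖x‖ ^ 2 / ((N : ℝ) * ((N : ℝ) - 2))) ^ (-(((N : ℝ) - 2) / 2))

/-- The energy `E(v₀,v₁)`. -/
def energy (N : ℕ) (v₀ v₁ : EuclideanSpace ℝ (Fin N) → ℝ) : ℝ :=
  (1 / 2) * (∫ x, v₁ x ^ 2)
    + (1 / 2) * (∫ x, ‖gradient v₀ x‖ ^ 2)
    - ((N : ℝ) - 2) / (2 * (N : ℝ)) * (∫ x, |v₀ x| ^ (2 * (N : ℝ) / ((N : ℝ) - 2)))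

/-- The first coordinate of a point of `ℝ^N`. -/
def firstCoord {N : ℕ} (x : EuclideanSpace ℝ (Fin N)) : ℝ :=
  if h : 0 < N then x ⟨0, h⟩ else 0

/-- The Lorentz-transformed ground state `W_ℓ(t,x)`; the sum `x₂² + ⋯ + x_N²` is written
as `‖x‖² - x₁²`. -/
def Wl (N : ℕ) (ℓ : ℝ) (t : ℝ) (x : EuclideanSpace ℝ (Fin N)) : ℝ :=
  (1 + (firstCoord x - t * ℓ) ^ 2 / ((N : ℝ) * ((N : ℝ) - 2) * (1 - ℓ ^ 2))
     + (‖x‖ ^ 2 - firstCoord x ^ 2) / ((N : ℝ) * ((N : ℝ) - 2))) ^ (-(((N : ℝ) - 2) / 2))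

/-- The time derivative `∂ₜ W_ℓ(t,x)`. -/
def dtWl (N : ℕ) (ℓ : ℝ) (t : ℝ) (x : EuclideanSpace ℝ (Fin N)) : ℝ :=
  deriv (fun s => Wl N ℓ s x) t

/-- The second partial derivative `∂²f/∂xⱼ²` at `x`. -/
def d2 {N : ℕ} (f : EuclideanSpace ℝ (Fin N) → ℝ) (j : Fin N)
    (x : EuclideanSpace ℝ (Fin N)) : ℝ :=
  fderiv ℝ (fun y => fderiv ℝ f y (EuclideanSpace.single j 1)) x (EuclideanSpace.single j 1)

/-
In odd dimension Kirchhoff's formula expresses a solution at `(t, x)` by the initial data near the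
sphere of radius `|t|` about `x`. For data supported in the ball of radius `R` the energy at a large
time `t` therefore lives in the shell `|‖x‖ - t| ≤ R`, where the first derivatives of the solution,
multiplied by `t ^ ((N - 1) / 2)`, converge boundedly to radiation fields in the variables
`s = ‖x‖ - t` and `θ = x / ‖x‖`. These fields are moments of derivatives of the data over the
half-spaces `⟪θ, y⟫ ≥ s`. When the initial position vanishes, their squares add up to a density
invariant under `(s, θ) ↦ (-s, -θ)`, so the energies outside (`s ≥ 0`) and inside (`s ≤ 0`) the
light cone have the same limit, which is half of the conserved energy. The limit at `-∞` follows by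
time reversal.
-/

open scoped ContDiff InnerProductSpace

section DirectionalDerivatives

variable {V : Type*} [NormedAddCommGroup V] [NormedSpace ℝ V]

/-- The directional derivative along `v`, as an operator on real functions. It serves both on `E`
and on space-time `ℝ × E`, where time is the direction `(1, 0)` and space is spanned by the
directions `(0, v)`. -/
def dirDeriv (v : V) (f : V → ℝ) (x : V) : ℝ := fderiv ℝ f x v

theorem contDiff_dirDeriv {f : V → ℝ} (hf : ContDiff ℝ ∞ f) (v : V) :
    ContDiff ℝ ∞ (dirDeriv v f) :=
  (hf.fderiv_right (m := ∞) (by simp)).clm_apply contDiff_const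

theorem continuous_dirDeriv {f : V → ℝ} (hf : ContDiff ℝ 1 f) (v : V) :
    Continuous (dirDeriv v f) :=
  (hf.continuous_fderiv one_ne_zero).clm_apply continuous_const

theorem dirDeriv_dirDeriv_apply {f : V → ℝ} (hf : ContDiff ℝ 2 f) (v w x : V) :
    dirDeriv v (dirDeriv w f) x = fderiv ℝ (fderiv ℝ f) x v w := by
  have hd : DifferentiableAt ℝ (fderiv ℝ f) x :=
    (hf.fderiv_right (m := 1) (by norm_num)).differentiable one_ne_zero x
  unfold dirDeriv
  rw [fderiv_clm_apply hd (differentiableAt_const w)]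
  simp

theorem dirDeriv_comm {f : V → ℝ} (hf : ContDiff ℝ 2 f) (v w : V) :
    dirDeriv v (dirDeriv w f) = dirDeriv w (dirDeriv v f) := by
  ext x
  rw [dirDeriv_dirDeriv_apply hf, dirDeriv_dirDeriv_apply hf]
  exact (hf.contDiffAt.isSymmSndFDerivAt (by simp)) v w

theorem dirDeriv_sum {κ : Type*} (s : Finset κ) {f : κ → V → ℝ}
    (hf : ∀ i ∈ s, Differentiable ℝ (f i)) (v : V) :
    dirDeriv v (fun x => ∑ i ∈ s, f i x) = fun x => ∑ i ∈ s, dirDeriv v (f i) x := by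
  ext x
  simp only [dirDeriv]
  rw [fderiv_fun_sum fun i hi => hf i hi x, _root_.sum_apply]

theorem dirDeriv_eqOn_zero {f : V → ℝ} {s : Set V} (hs : IsOpen s) {c : ℝ}
    (hf : EqOn f (fun _ => c) s) (v : V) : EqOn (dirDeriv v f) 0 s := by
  intro x hx
  have : f =ᶠ[nhds x] fun _ => c := hf.eventuallyEq_of_mem (hs.mem_nhds hx)
  simp [dirDeriv, this.fderiv_eq]

theorem tsupport_dirDeriv_subset (v : V) (f : V → ℝ) :
    tsupport (dirDeriv v f) ⊆ tsupport f :=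
  tsupport_fderiv_apply_subset ℝ v

theorem dirDeriv_const_mul (c : ℝ) (f : V → ℝ) (v : V) :
    dirDeriv v (fun x => c * f x) = fun x => c * dirDeriv v f x := by
  ext x
  simp only [dirDeriv, ← smul_eq_mul]
  rw [← Pi.smul_def, fderiv_const_smul_field]
  rfl

theorem dirDeriv_comp_add_smul (f : V → ℝ) (x v : V) (r : ℝ) :
    dirDeriv v (fun z => f (x + r • z)) = fun z => r * dirDeriv v f (x + r • z) := by
  ext z
  rw [dirDeriv, fderiv_comp_smul (f := fun z => f (x + z)), fderiv_comp_add_left]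
  rfl

variable {ι : Type*} [Fintype ι]

/-- The second-order operator `f ↦ ∑ i, ∂²f/∂eᵢ²`. It is the Laplacian when `e` is an orthonormal
basis of `E`, and the spatial Laplacian on `ℝ × E` when `e i = (0, b i)` with `b` such a basis. -/
def laplacianAlong (e : ι → V) (f : V → ℝ) (x : V) : ℝ :=
  ∑ i, dirDeriv (e i) (dirDeriv (e i) f) x

variable {e : ι → V}

theorem contDiff_laplacianAlong {f : V → ℝ} (hf : ContDiff ℝ ∞ f) :
    ContDiff ℝ ∞ (laplacianAlong e f) :=
  ContDiff.sum fun i _ => contDiff_dirDeriv (contDiff_dirDeriv hf (e i)) (e i)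

theorem contDiff_iterate_laplacianAlong {f : V → ℝ} (hf : ContDiff ℝ ∞ f) (n : ℕ) :
    ContDiff ℝ ∞ ((laplacianAlong e)^[n] f) :=
  Function.Iterate.rec (ContDiff ℝ ∞) hf (fun _ => contDiff_laplacianAlong) n

theorem laplacianAlong_dirDeriv {f : V → ℝ} (hf : ContDiff ℝ ∞ f) (v : V) :
    laplacianAlong e (dirDeriv v f) = dirDeriv v (laplacianAlong e f) := by
  have hd (i : ι) := contDiff_dirDeriv hf (e i)
  ext x
  unfold laplacianAlong
  rw [dirDeriv_sum _ fun i _ => (contDiff_dirDeriv (hd i) (e i)).differentiable (by simp)]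
  have comm {g : V → ℝ} (hg : ContDiff ℝ ∞ g) (w : V) :
      dirDeriv w (dirDeriv v g) = dirDeriv v (dirDeriv w g) :=
    dirDeriv_comm (contDiff_infty.1 hg 2) w v
  exact Finset.sum_congr rfl fun i _ => by rw [comm hf, comm (hd i)]

theorem iterate_laplacianAlong_dirDeriv {f : V → ℝ} (hf : ContDiff ℝ ∞ f) (v : V) (n : ℕ) :
    (laplacianAlong e)^[n] (dirDeriv v f) = dirDeriv v ((laplacianAlong e)^[n] f) := by
  induction n with
  | zero => rfl
  | succ n ih =>
    rw [Function.iterate_succ_apply', ih,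
      laplacianAlong_dirDeriv (contDiff_iterate_laplacianAlong hf n), Function.iterate_succ_apply']

theorem tsupport_laplacianAlong_subset (f : V → ℝ) :
    tsupport (laplacianAlong e f) ⊆ tsupport f := by
  refine closure_minimal (fun x hx => ?_) (isClosed_tsupport f)
  obtain ⟨i, -, hi⟩ := Finset.exists_ne_zero_of_sum_ne_zero hx
  exact tsupport_dirDeriv_subset _ _ (tsupport_dirDeriv_subset (e i) _ (subset_closure hi))

theorem tsupport_iterate_laplacianAlong_subset (f : V → ℝ) (n : ℕ) :
    tsupport ((laplacianAlong e)^[n] f) ⊆ tsupport f := by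
  induction n with
  | zero => rfl
  | succ n ih =>
    rw [Function.iterate_succ_apply']
    exact (tsupport_laplacianAlong_subset _).trans ih

theorem laplacianAlong_const_mul (c : ℝ) (f : V → ℝ) :
    laplacianAlong e (fun x => c * f x) = fun x => c * laplacianAlong e f x := by
  ext x
  simp only [laplacianAlong, dirDeriv_const_mul, Finset.mul_sum]

theorem laplacianAlong_comp_add_smul (f : V → ℝ) (x : V) (r : ℝ) :
    laplacianAlong e (fun z => f (x + r • z)) =
      fun z => r ^ 2 * laplacianAlong e f (x + r • z) := by
  ext z
  simp only [laplacianAlong, dirDeriv_comp_add_smul, dirDeriv_const_mul, Finset.mul_sum]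
  exact Finset.sum_congr rfl fun i _ => by ring

theorem iterate_laplacianAlong_comp_add_smul (f : V → ℝ) (x : V) (r : ℝ) (n : ℕ) :
    (laplacianAlong e)^[n] (fun z => f (x + r • z)) =
      fun z => r ^ (2 * n) * (laplacianAlong e)^[n] f (x + r • z) := by
  induction n with
  | zero => simp
  | succ n ih =>
    rw [Function.iterate_succ_apply', ih, laplacianAlong_const_mul, laplacianAlong_comp_add_smul,
      Function.iterate_succ_apply']
    ext z
    ring

end DirectionalDerivatives

section SpaceTime

variable {E : Type*} [NormedAddCommGroup E] [NormedSpace ℝ E] {ι : Type*} [Fintype ι]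
  {U : ℝ × E → ℝ}

theorem contDiff_slice (hU : ContDiff ℝ ∞ U) (t : ℝ) : ContDiff ℝ ∞ fun y => U (t, y) :=
  hU.comp (by fun_prop)

theorem dirDeriv_slice (hU : Differentiable ℝ U) (v : E) (t : ℝ) :
    dirDeriv v (fun y => U (t, y)) = fun y => dirDeriv (0, v) U (t, y) := by
  ext y
  have : HasFDerivAt (fun y => U (t, y)) _ y :=
    (hU (t, y)).hasFDerivAt.comp y (hasFDerivAt_prodMk_right t y)
  simp [dirDeriv, this.fderiv]

theorem hasDerivAt_time_slice (hU : Differentiable ℝ U) (t : ℝ) (y : E) :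
    HasDerivAt (fun s => U (s, y)) (dirDeriv (1, 0) U (t, y)) t :=
  (hU (t, y)).hasFDerivAt.comp_hasDerivAt t ((hasDerivAt_id t).prodMk (hasDerivAt_const t y))

theorem laplacianAlong_slice (hU : ContDiff ℝ ∞ U) (e : ι → E) (t : ℝ) :
    laplacianAlong e (fun y => U (t, y)) =
      fun y => laplacianAlong (fun i => ((0 : ℝ), e i)) U (t, y) := by
  ext y
  refine Finset.sum_congr rfl fun i _ => ?_
  rw [dirDeriv_slice (hU.differentiable (by simp)),
    dirDeriv_slice ((contDiff_dirDeriv hU _).differentiable (by simp))]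

theorem iterate_laplacianAlong_slice (hU : ContDiff ℝ ∞ U) (e : ι → E) (t : ℝ) (n : ℕ) :
    (laplacianAlong e)^[n] (fun y => U (t, y)) =
      fun y => (laplacianAlong fun i => ((0 : ℝ), e i))^[n] U (t, y) := by
  induction n with
  | zero => rfl
  | succ n ih =>
    rw [Function.iterate_succ_apply', ih,
      laplacianAlong_slice (contDiff_iterate_laplacianAlong hU n), Function.iterate_succ_apply']

end SpaceTime

section IntegrationByParts

variable {V : Type*} [NormedAddCommGroup V] [NormedSpace ℝ V]

theorem hasCompactSupport_mul_dirDeriv {f g : V → ℝ} (hf : Continuous f)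
    (hfg : HasCompactSupport fun x => f x * g x) (v : V) :
    HasCompactSupport fun x => f x * dirDeriv v g x := by
  refine HasCompactSupport.intro hfg fun x hx => ?_
  rcases eq_or_ne (f x) 0 with h | h
  · simp [h]
  · have hg : ∀ᶠ y in nhds x, g y = 0 := by
      filter_upwards [notMem_tsupport_iff_eventuallyEq.1 hx, hf.continuousAt.eventually_ne h]
        with y hy hfy using (mul_eq_zero.1 hy).resolve_left hfy
    obtain ⟨s, hs, hso, hxs⟩ := _root_.eventually_nhds_iff.1 hg
    simp [dirDeriv_eqOn_zero hso hs v hxs]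

variable [MeasurableSpace V] [BorelSpace V] [FiniteDimensional ℝ V]
  {μ : Measure V} [μ.IsAddHaarMeasure]

theorem integral_mul_dirDeriv {f g : V → ℝ} (hf : ContDiff ℝ 1 f) (hg : ContDiff ℝ 1 g)
    (hfg : HasCompactSupport fun x => f x * g x) (v : V) :
    ∫ x, f x * dirDeriv v g x ∂μ = -∫ x, dirDeriv v f x * g x ∂μ := by
  refine integral_mul_fderiv_eq_neg_fderiv_mul_of_integrable
    (Continuous.integrable_of_hasCompactSupport ?_ ?_)
    (Continuous.integrable_of_hasCompactSupport ?_ ?_)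
    ((hf.continuous.mul hg.continuous).integrable_of_hasCompactSupport hfg)
    (fun x _ => hf.differentiable one_ne_zero x) fun x _ => hg.differentiable one_ne_zero x
  · exact (continuous_dirDeriv hf v).mul hg.continuous
  · simpa only [dirDeriv, mul_comm] using
      hasCompactSupport_mul_dirDeriv hg.continuous (by simpa only [mul_comm] using hfg) v
  · exact hf.continuous.mul (continuous_dirDeriv hg v)
  · exact hasCompactSupport_mul_dirDeriv hf.continuous hfg v

end IntegrationByParts

section DerivativeOfIntegral

variable {X : Type*} [TopologicalSpace X] [MeasurableSpace X] [OpensMeasurableSpace X]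
  [T2Space X] {μ : Measure X} [IsFiniteMeasureOnCompacts μ]

theorem hasDerivAt_integral_of_continuous_deriv {F F' : ℝ → X → ℝ} {K : Set X} {t₀ : ℝ}
    (hK : IsCompact K) (hF : ∀ t z, HasDerivAt (F · z) (F' t z) t)
    (hFm : ∀ t, AEStronglyMeasurable (F t) μ) (hFi : Integrable (F t₀) μ)
    (hF' : Continuous fun p : ℝ × X => F' p.1 p.2)
    (hF'm : AEStronglyMeasurable (F' t₀) μ)
    (hF'K : ∀ᶠ t in nhds t₀, ∀ z ∉ K, F' t z = 0) :
    HasDerivAt (fun t => ∫ z, F t z ∂μ) (∫ z, F' t₀ z ∂μ) t₀ := by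
  obtain ⟨ε, hε, hεK⟩ := Metric.nhds_basis_closedBall.mem_iff.1 hF'K
  obtain ⟨C, hC⟩ := ((isCompact_closedBall t₀ ε).prod hK).exists_bound_of_continuousOn
    hF'.continuousOn
  refine (hasDerivAt_integral_of_dominated_loc_of_deriv_le (bound := K.indicator fun _ => C)
    (closedBall_mem_nhds _ hε) (Eventually.of_forall hFm) hFi hF'm
    (Eventually.of_forall fun z t ht => ?_) ?_
    (Eventually.of_forall fun z t _ => hF t z)).2
  · by_cases hz : z ∈ K
    · simpa only [indicator_of_mem hz] using hC (t, z) ⟨ht, hz⟩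
    · rw [indicator_of_notMem hz, hεK ht z hz, norm_zero]
  · exact (integrable_indicator_iff hK.measurableSet).2 (integrableOn_const hK.measure_lt_top.ne)

end DerivativeOfIntegral

section DividedPowers

/-- A sequence of functions behaving under differentiation and multiplication by the variable like
the divided powers `s ^ (n + c - 1) / (n + c - 1)!`. -/
structure IsDividedPowerFamily (ρ : ℕ → ℝ → ℝ) (c : ℝ) : Prop where
  continuous (n : ℕ) : Continuous (ρ n)
  hasDerivAt (n : ℕ) (s : ℝ) : HasDerivAt (ρ (n + 1)) (ρ n s) s
  mul_self (n : ℕ) (s : ℝ) : s * ρ n s = (n + c) * ρ (n + 1) s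

/-- The truncated divided power `s₊ ^ b / b!`. -/
def posDividedPow (b : ℕ) (s : ℝ) : ℝ := max 0 s ^ b / b.factorial

/-- The divided powers `s ^ (n - k) / (n - k)!`, extended by zero to `n < k`. -/
def shiftedDividedPow (k n : ℕ) (s : ℝ) : ℝ := if n < k then 0 else s ^ (n - k) / (n - k).factorial

theorem hasDerivAt_pow_div_factorial (n : ℕ) (s : ℝ) :
    HasDerivAt (fun s : ℝ => s ^ (n + 1) / (n + 1).factorial) (s ^ n / n.factorial) s := by
  refine ((hasDerivAt_pow (n + 1) s).div_const _).congr_deriv ?_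
  rw [Nat.factorial_succ]
  push_cast
  field_simp

theorem continuous_posDividedPow (b : ℕ) : Continuous (posDividedPow b) := by
  unfold posDividedPow
  fun_prop

theorem posDividedPow_of_nonpos {b : ℕ} (hb : b ≠ 0) {s : ℝ} (hs : s ≤ 0) :
    posDividedPow b s = 0 := by
  simp [posDividedPow, max_eq_left hs, hb]

theorem posDividedPow_of_nonneg (b : ℕ) {s : ℝ} (hs : 0 ≤ s) :
    posDividedPow b s = s ^ b / b.factorial := by
  rw [posDividedPow, max_eq_right hs]

theorem hasDerivAt_posDividedPow {b : ℕ} (hb : b ≠ 0) (s : ℝ) :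
    HasDerivAt (posDividedPow (b + 1)) (posDividedPow b s) s := by
  have away_from_zero : ∀ y ≠ 0, HasDerivAt (posDividedPow (b + 1)) (posDividedPow b y) y := by
    intro y hy
    rcases lt_or_gt_of_ne hy with h | h
    · rw [posDividedPow_of_nonpos hb h.le]
      refine (hasDerivAt_const y 0).congr_of_eventuallyEq ?_
      filter_upwards [gt_mem_nhds h] with z hz using posDividedPow_of_nonpos b.succ_ne_zero hz.le
    · rw [posDividedPow_of_nonneg b h.le]
      refine (hasDerivAt_pow_div_factorial b y).congr_of_eventuallyEq ?_
      filter_upwards [lt_mem_nhds h] with z hz using posDividedPow_of_nonneg _ hz.le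
  rcases eq_or_ne s 0 with rfl | hs
  · exact hasDerivAt_of_hasDerivAt_of_ne away_from_zero
      (continuous_posDividedPow _).continuousAt (continuous_posDividedPow b).continuousAt
  · exact away_from_zero s hs

theorem isDividedPowerFamily_posDividedPow :
    IsDividedPowerFamily (fun n => posDividedPow (n + 1)) 2 where
  continuous n := continuous_posDividedPow _
  hasDerivAt n := hasDerivAt_posDividedPow n.succ_ne_zero
  mul_self n s := by
    rcases le_total s 0 with h | h
    · simp [posDividedPow_of_nonpos _ h]
    · rw [posDividedPow_of_nonneg _ h, posDividedPow_of_nonneg _ h, Nat.factorial_succ (n + 1)]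
      push_cast
      field_simp
      ring

theorem shiftedDividedPow_of_lt {k n : ℕ} (h : n < k) : shiftedDividedPow k n = 0 := by
  ext s
  simp [shiftedDividedPow, h]

theorem shiftedDividedPow_add (k n : ℕ) (s : ℝ) :
    shiftedDividedPow k (k + n) s = s ^ n / n.factorial := by
  simp [shiftedDividedPow]

theorem isDividedPowerFamily_shiftedDividedPow (k : ℕ) :
    IsDividedPowerFamily (shiftedDividedPow k) (1 - k) where
  continuous n := by
    unfold shiftedDividedPow
    split_ifs <;> fun_prop
  hasDerivAt n s := by
    rcases lt_or_ge n k with h | h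
    · rw [shiftedDividedPow_of_lt h]
      rcases eq_or_lt_of_le (Nat.succ_le_of_lt h) with rfl | h'
      · simpa [funext (shiftedDividedPow_add (n + 1) 0)] using hasDerivAt_const s (1 : ℝ)
      · rw [shiftedDividedPow_of_lt h']
        exact hasDerivAt_const s 0
    · obtain ⟨m, rfl⟩ := Nat.exists_eq_add_of_le h
      rw [add_assoc, shiftedDividedPow_add, funext (shiftedDividedPow_add k (m + 1))]
      exact hasDerivAt_pow_div_factorial m s
  mul_self n s := by
    rcases lt_or_ge n k with h | h
    · rw [shiftedDividedPow_of_lt h]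
      rcases eq_or_lt_of_le (Nat.succ_le_of_lt h) with rfl | h'
      · simp
      · simp [shiftedDividedPow_of_lt h']
    · obtain ⟨m, rfl⟩ := Nat.exists_eq_add_of_le h
      rw [add_assoc, shiftedDividedPow_add, shiftedDividedPow_add, Nat.factorial_succ]
      push_cast
      field_simp
      ring

end DividedPowers

section BallKernels

variable {E : Type*} [NormedAddCommGroup E] {ρ : ℕ → ℝ → ℝ} {c : ℝ}

namespace IsDividedPowerFamily

theorem continuous_kernel (hρ : IsDividedPowerFamily ρ c) (n : ℕ) :
    Continuous fun z : E => ρ n ((1 - ‖z‖ ^ 2) / 2) :=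
  (hρ.continuous n).comp (by fun_prop)

theorem norm_sq_mul_kernel (hρ : IsDividedPowerFamily ρ c) (n : ℕ) (z : E) :
    ‖z‖ ^ 2 * ρ n ((1 - ‖z‖ ^ 2) / 2) =
      ρ n ((1 - ‖z‖ ^ 2) / 2) - 2 * (n + c) * ρ (n + 1) ((1 - ‖z‖ ^ 2) / 2) := by
  linear_combination -2 * hρ.mul_self n ((1 - ‖z‖ ^ 2) / 2)

variable [InnerProductSpace ℝ E]

theorem hasFDerivAt_kernel (hρ : IsDividedPowerFamily ρ c) (n : ℕ) (z : E) :
    HasFDerivAt (fun z : E => ρ (n + 1) ((1 - ‖z‖ ^ 2) / 2))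
      (-ρ n ((1 - ‖z‖ ^ 2) / 2) • innerSL ℝ z) z := by
  have norm_part : HasFDerivAt (fun z : E => (1 - ‖z‖ ^ 2) / 2) (-innerSL ℝ z) z := by
    refine (((hasStrictFDerivAt_norm_sq z).hasFDerivAt.const_sub 1).mul_const
      (2⁻¹ : ℝ)).congr_fderiv ?_
    ext v
    simp
  refine ((hρ.hasDerivAt n _).comp_hasFDerivAt z norm_part).congr_fderiv ?_
  rw [smul_neg, neg_smul]

theorem dirDeriv_kernel (hρ : IsDividedPowerFamily ρ c) (n : ℕ) (v z : E) :
    dirDeriv v (fun z => ρ (n + 1) ((1 - ‖z‖ ^ 2) / 2)) z =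
      -(ρ n ((1 - ‖z‖ ^ 2) / 2) * ⟪v, z⟫_ℝ) := by
  rw [dirDeriv, (hρ.hasFDerivAt_kernel n z).fderiv]
  simp [real_inner_comm]

theorem contDiff_kernel (hρ : IsDividedPowerFamily ρ c) (n : ℕ) :
    ContDiff ℝ 1 fun z : E => ρ (n + 1) ((1 - ‖z‖ ^ 2) / 2) := by
  refine contDiff_one_iff_fderiv.2 ⟨fun z => (hρ.hasFDerivAt_kernel n z).differentiableAt, ?_⟩
  rw [funext fun z : E => (hρ.hasFDerivAt_kernel n z).fderiv]
  exact (hρ.continuous_kernel n).neg.smul (innerSL ℝ (E := E)).continuous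

variable [FiniteDimensional ℝ E] [MeasurableSpace E] [BorelSpace E]

theorem integral_kernel_mul_inner (hρ : IsDividedPowerFamily ρ c) (n : ℕ) {G : E → ℝ}
    (hG : ContDiff ℝ 1 G)
    (hGc : HasCompactSupport fun z => ρ (n + 1) ((1 - ‖z‖ ^ 2) / 2) * G z) (v : E) :
    ∫ z, ⟪v, z⟫_ℝ * (ρ n ((1 - ‖z‖ ^ 2) / 2) * G z) =
      ∫ z, ρ (n + 1) ((1 - ‖z‖ ^ 2) / 2) * dirDeriv v G z := by
  rw [integral_mul_dirDeriv (hρ.contDiff_kernel n) hG hGc, ← integral_neg]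
  refine integral_congr_ae (Eventually.of_forall fun z => ?_)
  simp only [hρ.dirDeriv_kernel]
  ring

theorem integral_kernel_mul_inner_sq (hρ : IsDividedPowerFamily ρ c) {f : E → ℝ}
    (hf : ContDiff ℝ ∞ f)
    (hfc : ∀ n, HasCompactSupport fun z => ρ n ((1 - ‖z‖ ^ 2) / 2) * f z) (v : E) (n : ℕ) :
    ∫ z, ⟪v, z⟫_ℝ ^ 2 * (ρ n ((1 - ‖z‖ ^ 2) / 2) * f z) =
      ‖v‖ ^ 2 * (∫ z, ρ (n + 1) ((1 - ‖z‖ ^ 2) / 2) * f z) +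
        ∫ z, ρ (n + 2) ((1 - ‖z‖ ^ 2) / 2) * dirDeriv v (dirDeriv v f) z := by
  have hκ (n : ℕ) := hρ.continuous_kernel (E := E) n
  have hinner : ContDiff ℝ ∞ fun z => ⟪v, z⟫_ℝ := contDiff_const.inner ℝ contDiff_id
  have hdf : ContDiff ℝ ∞ (dirDeriv v f) := contDiff_dirDeriv hf v
  have hdfc (n : ℕ) := hasCompactSupport_mul_dirDeriv (hκ n) (hfc n) v
  have product_rule (z : E) : dirDeriv v (fun z => ⟪v, z⟫_ℝ * f z) z =
      ‖v‖ ^ 2 * f z + ⟪v, z⟫_ℝ * dirDeriv v f z := by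
    have : fderiv ℝ (fun z => ⟪v, z⟫_ℝ) z = innerSL ℝ v := (innerSL ℝ v).fderiv
    rw [dirDeriv, fderiv_fun_mul (hinner.differentiable (by simp) z)
      (hf.differentiable (by simp) z), this]
    simp [dirDeriv, add_comm, mul_comm]
  have hinnerfc : HasCompactSupport
      fun z => ρ (n + 1) ((1 - ‖z‖ ^ 2) / 2) * (⟪v, z⟫_ℝ * f z) := by
    simpa only [mul_left_comm] using! (hfc (n + 1)).mul_left (f := fun z => ⟪v, z⟫_ℝ)
  rw [funext fun z => show ⟪v, z⟫_ℝ ^ 2 * (ρ n ((1 - ‖z‖ ^ 2) / 2) * f z) =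
      ⟪v, z⟫_ℝ * (ρ n ((1 - ‖z‖ ^ 2) / 2) * (⟪v, z⟫_ℝ * f z)) by ring,
    hρ.integral_kernel_mul_inner n ((hinner.mul hf).of_le (by simp)) hinnerfc v,
    ← hρ.integral_kernel_mul_inner (n + 1) (hdf.of_le (by simp)) (hdfc (n + 2)) v,
    ← integral_const_mul, ← integral_add]
  · refine integral_congr_ae (Eventually.of_forall fun z => ?_)
    simp only [product_rule]
    ring
  · exact (((hκ _).mul hf.continuous).integrable_of_hasCompactSupport (hfc (n + 1))).const_mul _
  · exact (hinner.continuous.mul ((hκ _).mul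
      hdf.continuous)).integrable_of_hasCompactSupport (hdfc (n + 1)).mul_left

theorem integral_kernel_mul (hρ : IsDividedPowerFamily ρ c) {f : E → ℝ} (hf : ContDiff ℝ ∞ f)
    (hfc : ∀ n, HasCompactSupport fun z => ρ n ((1 - ‖z‖ ^ 2) / 2) * f z)
    {ι : Type*} [Fintype ι] (b : OrthonormalBasis ι ℝ E) (n : ℕ) :
    ∫ z, ρ n ((1 - ‖z‖ ^ 2) / 2) * f z =
      (2 * (n + c) + Module.finrank ℝ E) * (∫ z, ρ (n + 1) ((1 - ‖z‖ ^ 2) / 2) * f z) +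
        ∫ z, ρ (n + 2) ((1 - ‖z‖ ^ 2) / 2) * laplacianAlong b f z := by
  let κ (n : ℕ) (z : E) : ℝ := ρ n ((1 - ‖z‖ ^ 2) / 2)
  have hκ (n : ℕ) : Continuous (κ n) := hρ.continuous_kernel n
  have hfi (n : ℕ) : Integrable fun z => κ n z * f z :=
    ((hκ n).mul hf.continuous).integrable_of_hasCompactSupport (hfc n)
  have parseval : ∫ z, ‖z‖ ^ 2 * (κ n z * f z) =
      ∑ i, ∫ z, ⟪b i, z⟫_ℝ ^ 2 * (κ n z * f z) := by
    simp only [← b.sum_sq_inner_right, Finset.sum_mul]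
    refine integral_finsetSum _ fun i _ => Continuous.integrable_of_hasCompactSupport ?_
      (hfc n).mul_left
    have := hf.continuous
    fun_prop
  have recursion : ∫ z, ‖z‖ ^ 2 * (κ n z * f z) =
      (∫ z, κ n z * f z) - 2 * (n + c) * ∫ z, κ (n + 1) z * f z := by
    rw [← integral_const_mul, ← integral_sub (hfi n) ((hfi _).const_mul _)]
    refine integral_congr_ae (Eventually.of_forall fun z => ?_)
    linear_combination f z * hρ.norm_sq_mul_kernel n z
  have laplacian_sum : ∫ z, κ (n + 2) z * laplacianAlong b f z =
      ∑ i, ∫ z, κ (n + 2) z * dirDeriv (b i) (dirDeriv (b i) f) z := by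
    simp only [laplacianAlong, Finset.mul_sum]
    refine integral_finsetSum _ fun i _ => Continuous.integrable_of_hasCompactSupport
      ((hκ _).mul (contDiff_dirDeriv (contDiff_dirDeriv hf _) _).continuous) ?_
    exact hasCompactSupport_mul_dirDeriv (hκ _)
      (hasCompactSupport_mul_dirDeriv (hκ _) (hfc _) (b i)) (b i)
  simp only [κ, hρ.integral_kernel_mul_inner_sq hf hfc, b.norm_eq_one, Finset.sum_add_distrib,
    one_pow, one_mul, Finset.sum_const, Finset.card_univ, nsmul_eq_mul,
    ← Module.finrank_eq_card_basis b.toBasis] at parseval recursion laplacian_sum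
  linear_combination parseval - recursion - laplacian_sum

end IsDividedPowerFamily

end BallKernels

section BallMeans

variable {E : Type*} [NormedAddCommGroup E]

theorem posDividedPow_kernel_of_one_le {b : ℕ} (hb : b ≠ 0) {z : E} (hz : 1 ≤ ‖z‖) :
    posDividedPow b ((1 - ‖z‖ ^ 2) / 2) = 0 :=
  posDividedPow_of_nonpos hb (by nlinarith)

theorem continuous_posDividedPow_kernel (b : ℕ) :
    Continuous fun z : E => posDividedPow b ((1 - ‖z‖ ^ 2) / 2) :=
  (continuous_posDividedPow b).comp (by fun_prop)

theorem hasCompactSupport_posDividedPow_kernel [ProperSpace E] {b : ℕ} (hb : b ≠ 0) :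
    HasCompactSupport fun z : E => posDividedPow b ((1 - ‖z‖ ^ 2) / 2) :=
  HasCompactSupport.intro (isCompact_closedBall 0 1) fun z hz =>
    posDividedPow_kernel_of_one_le hb (by simpa using (not_le.1 (by simpa using hz)).le)

variable [InnerProductSpace ℝ E] {ι : Type*} [Fintype ι] (b : OrthonormalBasis ι ℝ E)

theorem dirDeriv_eq_sum_inner (f : E → ℝ) (v x : E) :
    dirDeriv v f x = ∑ i, ⟪b i, v⟫_ℝ * dirDeriv (b i) f x := by
  have := congrArg (fderiv ℝ f x) (b.sum_repr' v)
  rw [map_sum] at this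
  simpa [dirDeriv] using this.symm

variable [FiniteDimensional ℝ E] [MeasurableSpace E] [BorelSpace E]

/-- The integral of `z ↦ g (x + r • z)` against the weight `(1 - ‖z‖²)₊ ^ b / (2 ^ b * b!)`. The
averages over spheres in Kirchhoff's formula are replaced by these more regular means. -/
def ballMean (b : ℕ) (g : E → ℝ) (x : E) (r : ℝ) : ℝ :=
  ∫ z, posDividedPow b ((1 - ‖z‖ ^ 2) / 2) * g (x + r • z)

theorem integrable_posDividedPow_kernel_mul {b : ℕ} (hb : b ≠ 0) {f : E → ℝ} (hf : Continuous f) :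
    Integrable fun z : E => posDividedPow b ((1 - ‖z‖ ^ 2) / 2) * f z :=
  ((continuous_posDividedPow_kernel b).mul hf).integrable_of_hasCompactSupport
    (hasCompactSupport_posDividedPow_kernel hb).mul_right

theorem integral_posDividedPow_one_kernel_pos :
    0 < ∫ z : E, posDividedPow 1 ((1 - ‖z‖ ^ 2) / 2) :=
  (continuous_posDividedPow_kernel 1).integral_pos_of_hasCompactSupport_nonneg_nonzero
    (hasCompactSupport_posDividedPow_kernel one_ne_zero)
    (fun z => by simp [posDividedPow]) (x := 0) (by simp [posDividedPow])

theorem ballMean_eq {g : E → ℝ} (hg : ContDiff ℝ ∞ g) (n : ℕ) (x : E) (r : ℝ) :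
    ballMean (n + 1) g x r =
      (2 * (n + 2) + Module.finrank ℝ E) * ballMean (n + 2) g x r +
        r ^ 2 * ballMean (n + 3) (laplacianAlong b g) x r := by
  have := isDividedPowerFamily_posDividedPow.integral_kernel_mul
    (f := fun z => g (x + r • z)) (by fun_prop)
    (fun n => (hasCompactSupport_posDividedPow_kernel n.succ_ne_zero).mul_right) b n
  simpa only [laplacianAlong_comp_add_smul, mul_left_comm, integral_const_mul] using! this

theorem integral_kernel_mul_radial_deriv {g : E → ℝ} (hg : ContDiff ℝ ∞ g) (n : ℕ) (x : E)
    (r : ℝ) :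
    ∫ z, posDividedPow (n + 1) ((1 - ‖z‖ ^ 2) / 2) * dirDeriv z g (x + r • z) =
      r * ballMean (n + 2) (laplacianAlong b g) x r := by
  have hdg (i : ι) : ContDiff ℝ ∞ fun z => dirDeriv (b i) g (x + r • z) := by
    have := contDiff_dirDeriv hg (b i)
    fun_prop
  have along_basis (i : ι) :
      ∫ z, ⟪b i, z⟫_ℝ * (posDividedPow (n + 1) ((1 - ‖z‖ ^ 2) / 2) *
        dirDeriv (b i) g (x + r • z)) =
      r * ∫ z, posDividedPow (n + 2) ((1 - ‖z‖ ^ 2) / 2) *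
        dirDeriv (b i) (dirDeriv (b i) g) (x + r • z) := by
    rw [isDividedPowerFamily_posDividedPow.integral_kernel_mul_inner n
      ((hdg i).of_le (by simp))
      (hasCompactSupport_posDividedPow_kernel (n + 1).succ_ne_zero).mul_right (b i),
      dirDeriv_comp_add_smul, ← integral_const_mul]
    simp only [mul_left_comm]
  have expand (z : E) := dirDeriv_eq_sum_inner b g z (x + r • z)
  simp only [expand, Finset.mul_sum, ballMean, laplacianAlong]
  rw [integral_finsetSum, integral_finsetSum, Finset.mul_sum]
  · exact Finset.sum_congr rfl fun i _ => by simpa only [mul_left_comm] using along_basis i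
  · intro i _
    have := contDiff_dirDeriv (contDiff_dirDeriv hg (b i)) (b i)
    exact integrable_posDividedPow_kernel_mul (n + 1).succ_ne_zero (by fun_prop)
  · intro i _
    have := (hdg i).continuous
    exact integrable_posDividedPow_kernel_mul n.succ_ne_zero (by fun_prop)

end BallMeans

section Cones

variable {E : Type*} [NormedAddCommGroup E] [NormedSpace ℝ E] {U : ℝ × E → ℝ}

theorem hasDerivAt_comp_cone (hU : Differentiable ℝ U) (x z : E) (t τ : ℝ) :
    HasDerivAt (fun τ => U (τ, x + (t - τ) • z))
      (fderiv ℝ U (τ, x + (t - τ) • z) (1, -z)) τ := by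
  have line : HasDerivAt (fun τ : ℝ => (τ, x + (t - τ) • z)) ((1 : ℝ), -z) τ := by
    simpa using (hasDerivAt_id τ).prodMk
      ((((hasDerivAt_id τ).const_sub t).smul_const z).const_add x)
  exact (hU _).hasFDerivAt.comp_hasDerivAt τ line

theorem fderiv_one_neg (hU : Differentiable ℝ U) (τ : ℝ) (y z : E) :
    fderiv ℝ U (τ, y) (1, -z) = dirDeriv (1, 0) U (τ, y) - dirDeriv z (fun y => U (τ, y)) y := by
  rw [dirDeriv_slice hU]
  simp only [dirDeriv]
  rw [← map_sub]
  simp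

end Cones

section Characteristics

variable {E : Type*} [NormedAddCommGroup E] [InnerProductSpace ℝ E] [FiniteDimensional ℝ E]
  [MeasurableSpace E] [BorelSpace E] {ι : Type*} [Fintype ι] (b : OrthonormalBasis ι ℝ E)
  {U : ℝ × E → ℝ}

theorem hasDerivAt_ballMean_cone (hU : ContDiff ℝ ∞ U) (n : ℕ) (x : E) (t τ : ℝ) :
    HasDerivAt (fun τ => ballMean (n + 1) (fun y => U (τ, y)) x (t - τ))
      (ballMean (n + 1) (fun y => dirDeriv (1, 0) U (τ, y)) x (t - τ) -
        (t - τ) * ballMean (n + 2) (fun y => laplacianAlong (fun i => ((0 : ℝ), b i)) U (τ, y))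
          x (t - τ)) τ := by
  have hκ := continuous_posDividedPow_kernel (E := E) (n + 1)
  have hU' : Differentiable ℝ U := hU.differentiable (by simp)
  have hfd : Continuous (fderiv ℝ U) := hU.continuous_fderiv (by simp)
  have joint : Continuous fun p : ℝ × E => posDividedPow (n + 1) ((1 - ‖p.2‖ ^ 2) / 2) *
      fderiv ℝ U (p.1, x + (t - p.1) • p.2) (1, -p.2) :=
    (hκ.comp continuous_snd).mul ((hfd.comp (by fun_prop)).clm_apply (by fun_prop))
  refine (hasDerivAt_integral_of_continuous_deriv (isCompact_closedBall (0 : E) 1) (t₀ := τ)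
    (fun τ z => (hasDerivAt_comp_cone hU' x z t τ).const_mul
      (posDividedPow (n + 1) ((1 - ‖z‖ ^ 2) / 2)))
    (fun τ => Continuous.aestronglyMeasurable (by fun_prop))
    (integrable_posDividedPow_kernel_mul n.succ_ne_zero (by fun_prop)) joint
    (joint.comp (by fun_prop : Continuous fun z : E => (τ, z))).aestronglyMeasurable
    (Eventually.of_forall fun τ z hz => ?_)
    ).congr_deriv ?_
  · have hz : 1 ≤ ‖z‖ := (not_le.1 (by simpa using hz)).le
    rw [posDividedPow_kernel_of_one_le n.succ_ne_zero hz, zero_mul]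
  · have hdt := contDiff_dirDeriv hU (1, 0)
    rw [← laplacianAlong_slice hU, ← integral_kernel_mul_radial_deriv b (contDiff_slice hU τ),
      ballMean, ← integral_sub]
    · simp only [fderiv_one_neg hU', mul_sub]
    · exact integrable_posDividedPow_kernel_mul n.succ_ne_zero (by fun_prop)
    · refine integrable_posDividedPow_kernel_mul n.succ_ne_zero ?_
      rw [show (fun z => dirDeriv z (fun y => U (τ, y)) (x + (t - τ) • z)) = fun z =>
        fderiv ℝ (fun y => U (τ, y)) (x + (t - τ) • z) z from rfl]
      have := (contDiff_slice hU τ).continuous_fderiv (by simp)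
      fun_prop

end Characteristics

section KirchhoffSums

open scoped Nat

/-- The coefficients of the odd-dimensional Kirchhoff formula written with ball means. -/
def kirchhoffCoeff (m j : ℕ) : ℝ := m.choose j / (2 * j + 1)‼

/-- The combination `A ↦ ∑ j, C(m, j) (t ^ (2j+1) B j + (2j+1) t ^ (2j) A j + t ^ (2j+2) A (j+1))`
by which the ball means `A j`, `B j` of the iterated Laplacians of the initial position and velocity
express the solution at time `t`. -/
def kirchhoffSum (m : ℕ) (t : ℝ) (A B : ℕ → ℝ) : ℝ :=
  ∑ j ∈ Finset.range (m + 1), kirchhoffCoeff m j *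
    (t ^ (2 * j + 1) * B j + (2 * j + 1) * t ^ (2 * j) * A j + t ^ (2 * j + 2) * A (j + 1))

theorem kirchhoffCoeff_zero (m : ℕ) : kirchhoffCoeff m 0 = 1 := by simp [kirchhoffCoeff]

theorem kirchhoffCoeff_succ_self (m : ℕ) : kirchhoffCoeff m (m + 1) = 0 := by
  simp [kirchhoffCoeff]

theorem kirchhoffCoeff_mul_doubleFactorial (m j : ℕ) :
    kirchhoffCoeff m j * (2 * j + 1)‼ = m.choose j :=
  div_mul_cancel₀ _ (by exact_mod_cast (Nat.doubleFactorial_pos _).ne')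

theorem choose_succ_mul_succ_eq (m j : ℕ) :
    (m.choose (j + 1) : ℝ) * (j + 1) = m.choose j * (m - j) := by
  rcases le_or_gt j m with hj | hj
  · have := Nat.choose_succ_right_eq m j
    rw [← Nat.cast_sub hj]
    exact_mod_cast this
  · simp [Nat.choose_eq_zero_of_lt hj, Nat.choose_eq_zero_of_lt (hj.trans j.lt_succ_self)]

theorem kirchhoffCoeff_succ (m j : ℕ) :
    kirchhoffCoeff m (j + 1) * ((2 * j + 3) * (j + 1)) = kirchhoffCoeff m j * (m - j) := by
  have hpos : ((2 * j + 1)‼ : ℝ) ≠ 0 := by exact_mod_cast (Nat.doubleFactorial_pos _).ne'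
  have hsucc := kirchhoffCoeff_mul_doubleFactorial m (j + 1)
  rw [show 2 * (j + 1) + 1 = 2 * j + 1 + 2 by ring, Nat.doubleFactorial_add_two] at hsucc
  push_cast at hsucc
  apply mul_right_cancel₀ hpos
  linear_combination (j + 1) * hsucc + choose_succ_mul_succ_eq m j -
    (m - j) * kirchhoffCoeff_mul_doubleFactorial m j

theorem kirchhoffCoeff_succ_succ (m j : ℕ) :
    (2 * m + 3) * kirchhoffCoeff (m + 1) (j + 1) =
      (2 * m + 2 * j + 5) * kirchhoffCoeff m (j + 1) + kirchhoffCoeff m j := by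
  have hpos : ((2 * j + 3) * (2 * j + 1)‼ : ℝ) ≠ 0 :=
    mul_ne_zero (by positivity) (by exact_mod_cast (Nat.doubleFactorial_pos _).ne')
  have hsucc (n : ℕ) := kirchhoffCoeff_mul_doubleFactorial n (j + 1)
  simp only [show 2 * (j + 1) + 1 = 2 * j + 1 + 2 by ring, Nat.doubleFactorial_add_two] at hsucc
  push_cast at hsucc
  have hchoose : ((m + 1).choose (j + 1) : ℝ) = m.choose j + m.choose (j + 1) := by
    exact_mod_cast Nat.choose_succ_succ m j
  apply mul_right_cancel₀ hpos
  linear_combination (2 * m + 3) * hsucc (m + 1) - (2 * m + 2 * j + 5) * hsucc m +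
    (2 * m + 3) * hchoose - (2 * j + 3) * kirchhoffCoeff_mul_doubleFactorial m j -
    2 * choose_succ_mul_succ_eq m j

theorem hasDerivAt_kirchhoffTerm {m : ℕ} {t τ : ℝ} {A B : ℕ → ℝ → ℝ}
    (hA : ∀ j τ, HasDerivAt (A j) (B j τ - (t - τ) * A (j + 1) τ) τ)
    (hB : ∀ j τ, HasDerivAt (B j) ((2 * j + 2 * m + 3) * A (j + 1) τ
      + (t - τ) ^ 2 * A (j + 2) τ - (t - τ) * B (j + 1) τ) τ) (j : ℕ) :
    HasDerivAt (fun τ => kirchhoffCoeff m j * ((t - τ) ^ (2 * j + 1) * B j τ +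
        (2 * j + 1) * (t - τ) ^ (2 * j) * A j τ + (t - τ) ^ (2 * j + 2) * A (j + 1) τ))
      (kirchhoffCoeff m (j + 1) * ((2 * (j + 1 : ℕ) + 1) * (2 * (j + 1 : ℕ))) *
          (t - τ) ^ (2 * (j + 1) - 1) * A (j + 1) τ -
        kirchhoffCoeff m j * ((2 * j + 1) * (2 * j)) * (t - τ) ^ (2 * j - 1) * A j τ) τ := by
  have hpow (n : ℕ) : HasDerivAt (fun τ : ℝ => (t - τ) ^ n) (-(n * (t - τ) ^ (n - 1))) τ :=
    (((hasDerivAt_id τ).const_sub t).fun_pow n).congr_deriv (by simp)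
  refine (((((hpow (2 * j + 1)).mul (hB j τ)).add
    (((hpow (2 * j)).const_mul (2 * (j : ℝ) + 1)).mul (hA j τ))).add
    ((hpow (2 * j + 2)).mul (hA (j + 1) τ))).const_mul (kirchhoffCoeff m j)).congr_deriv ?_
  rw [show 2 * (j + 1) - 1 = 2 * j + 1 by omega, show 2 * j + 1 - 1 = 2 * j by omega,
    show 2 * j + 2 - 1 = 2 * j + 1 by omega]
  push_cast
  linear_combination -2 * (t - τ) ^ (2 * j + 1) * A (j + 1) τ * kirchhoffCoeff_succ m j

/-- The hypotheses are the relations between ball means along the cone `τ ↦ (τ, t - τ)`, where the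
combination `kirchhoffSum` turns out to be constant. -/
theorem eq_kirchhoffSum_of_hasDerivAt (m : ℕ) (t : ℝ) (A B : ℕ → ℝ → ℝ)
    (hA : ∀ j τ, HasDerivAt (A j) (B j τ - (t - τ) * A (j + 1) τ) τ)
    (hB : ∀ j τ, HasDerivAt (B j) ((2 * j + 2 * m + 3) * A (j + 1) τ
      + (t - τ) ^ 2 * A (j + 2) τ - (t - τ) * B (j + 1) τ) τ) :
    A 0 t = kirchhoffSum m t (A · 0) (B · 0) := by
  have stationary (τ : ℝ) :
      HasDerivAt (fun τ => kirchhoffSum m (t - τ) (A · τ) (B · τ)) 0 τ := by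
    have telescope := HasDerivAt.fun_sum fun j (_ : j ∈ Finset.range (m + 1)) =>
      hasDerivAt_kirchhoffTerm (τ := τ) hA hB j
    rw [Finset.sum_range_sub (fun j : ℕ => kirchhoffCoeff m j * ((2 * (j : ℝ) + 1) * (2 * j)) *
      (t - τ) ^ (2 * j - 1) * A j τ), kirchhoffCoeff_succ_self] at telescope
    simpa [kirchhoffSum] using! telescope
  have constant := is_const_of_deriv_eq_zero (fun τ => (stationary τ).differentiableAt)
    (fun τ => (stationary τ).deriv) t 0
  simp only [sub_self, sub_zero] at constant
  rw [← constant, kirchhoffSum, Finset.sum_range_succ']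
  simp [kirchhoffCoeff_zero]

theorem mul_sum_kirchhoffCoeff_succ {a : ℕ → ℕ → ℝ}
    (ha : ∀ j n, a j n = (2 * n + 3) * a j (n + 1) + a (j + 1) (n + 2)) (m : ℕ) :
    (2 * m + 3) * ∑ j ∈ Finset.range (m + 2), kirchhoffCoeff (m + 1) j * a j (m + 1 + j) =
      ∑ j ∈ Finset.range (m + 1), kirchhoffCoeff m j * a j (m + j) := by
  have expand : ∑ j ∈ Finset.range (m + 1), kirchhoffCoeff m j * a j (m + j) =
      ∑ j ∈ Finset.range (m + 1),
          kirchhoffCoeff m j * ((2 * m + 2 * j + 3) * a j (m + 1 + j)) +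
        ∑ j ∈ Finset.range (m + 1), kirchhoffCoeff m j * a (j + 1) (m + 1 + (j + 1)) := by
    rw [← Finset.sum_add_distrib]
    refine Finset.sum_congr rfl fun j _ => ?_
    rw [ha, show m + j + 1 = m + 1 + j by ring, show m + j + 2 = m + 1 + (j + 1) by ring]
    push_cast
    ring
  have extend := Finset.sum_range_succ (fun j : ℕ =>
    kirchhoffCoeff m j * ((2 * m + 2 * j + 3) * a j (m + 1 + j))) (m + 1)
  rw [kirchhoffCoeff_succ_self, zero_mul, add_zero, Finset.sum_range_succ'] at extend
  have pascal : (2 * m + 3) * ∑ j ∈ Finset.range (m + 1),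
        kirchhoffCoeff (m + 1) (j + 1) * a (j + 1) (m + 1 + (j + 1)) =
      ∑ j ∈ Finset.range (m + 1), kirchhoffCoeff m (j + 1) *
          ((2 * m + 2 * (j + 1 : ℕ) + 3) * a (j + 1) (m + 1 + (j + 1))) +
        ∑ j ∈ Finset.range (m + 1), kirchhoffCoeff m j * a (j + 1) (m + 1 + (j + 1)) := by
    rw [← Finset.sum_add_distrib, Finset.mul_sum]
    refine Finset.sum_congr rfl fun j _ => ?_
    push_cast
    linear_combination a (j + 1) (m + 1 + (j + 1)) * kirchhoffCoeff_succ_succ m j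
  rw [kirchhoffCoeff_zero] at extend
  rw [Finset.sum_range_succ', kirchhoffCoeff_zero]
  push_cast at extend pascal ⊢
  linear_combination pascal + extend - expand

theorem doubleFactorial_mul_sum_kirchhoffCoeff {a : ℕ → ℕ → ℝ}
    (ha : ∀ j n, a j n = (2 * n + 3) * a j (n + 1) + a (j + 1) (n + 2)) (m : ℕ) :
    (2 * m + 1)‼ * ∑ j ∈ Finset.range (m + 1), kirchhoffCoeff m j * a j (m + j) = a 0 0 := by
  induction m with
  | zero => simp [kirchhoffCoeff_zero]
  | succ m ih =>
    rw [← ih, ← mul_sum_kirchhoffCoeff_succ ha m, show 2 * (m + 1) + 1 = 2 * m + 1 + 2 by ring,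
      Nat.doubleFactorial_add_two]
    push_cast
    ring

end KirchhoffSums

section WaveEquation

variable {E : Type*} [NormedAddCommGroup E] [InnerProductSpace ℝ E] {ι : Type*} [Fintype ι]
  {b : OrthonormalBasis ι ℝ E} {U : ℝ × E → ℝ}

/-- Smooth solutions of the wave equation on `ℝ × E`, the spatial Laplacian being written in the
orthonormal basis `b`. -/
structure IsWaveSolution (b : OrthonormalBasis ι ℝ E) (U : ℝ × E → ℝ) : Prop where
  contDiff : ContDiff ℝ ∞ U
  wave_eq : dirDeriv (1, 0) (dirDeriv (1, 0) U) = laplacianAlong (fun i => ((0 : ℝ), b i)) U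

namespace IsWaveSolution

protected theorem dirDeriv (hU : IsWaveSolution b U) (v : ℝ × E) :
    IsWaveSolution b (dirDeriv v U) where
  contDiff := contDiff_dirDeriv hU.contDiff v
  wave_eq := by
    rw [dirDeriv_comm (contDiff_infty.1 hU.contDiff 2),
      dirDeriv_comm (contDiff_infty.1 (contDiff_dirDeriv hU.contDiff _) 2), hU.wave_eq,
      laplacianAlong_dirDeriv hU.contDiff]

theorem differentiable (hU : IsWaveSolution b U) : Differentiable ℝ U :=
  hU.contDiff.differentiable (by simp)

theorem kirchhoff_formula [FiniteDimensional ℝ E] [MeasurableSpace E] [BorelSpace E]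
    (hU : IsWaveSolution b U) {k : ℕ} (hk : Module.finrank ℝ E = 2 * k + 1) (t : ℝ) (x : E) :
    (∫ z : E, posDividedPow 1 ((1 - ‖z‖ ^ 2) / 2)) * U (t, x) = kirchhoffSum (k + 1) t
      (fun j => ballMean (j + 1) ((laplacianAlong b)^[j] fun y => U (0, y)) x t)
      (fun j => ballMean (j + 1)
        ((laplacianAlong b)^[j] fun y => dirDeriv (1, 0) U (0, y)) x t) := by
  have hdt := (hU.dirDeriv (1, 0)).contDiff
  have hiter (j : ℕ) := contDiff_iterate_laplacianAlong (e := fun i => ((0 : ℝ), b i))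
    hU.contDiff j
  have hiterdt (j : ℕ) := contDiff_iterate_laplacianAlong (e := fun i => ((0 : ℝ), b i)) hdt j
  have along_cone := eq_kirchhoffSum_of_hasDerivAt (k + 1) t
    (fun j τ => ballMean (j + 1)
      (fun y => (laplacianAlong fun i => ((0 : ℝ), b i))^[j] U (τ, y)) x (t - τ))
    (fun j τ => ballMean (j + 1) (fun y => (laplacianAlong fun i => ((0 : ℝ), b i))^[j]
      (dirDeriv (1, 0) U) (τ, y)) x (t - τ)) ?_ ?_
  · simp only [← iterate_laplacianAlong_slice hU.contDiff, ← iterate_laplacianAlong_slice hdt,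
      sub_zero] at along_cone
    rw [← along_cone]
    simp [ballMean, integral_mul_const]
  · intro j τ
    refine (hasDerivAt_ballMean_cone b (hiter j) j x t τ).congr_deriv ?_
    rw [← Function.iterate_succ_apply' (laplacianAlong _),
      iterate_laplacianAlong_dirDeriv hU.contDiff]
  · intro j τ
    refine (hasDerivAt_ballMean_cone b (hiterdt j) j x t τ).congr_deriv ?_
    rw [← Function.iterate_succ_apply' (laplacianAlong _), ← iterate_laplacianAlong_dirDeriv hdt,
      hU.wave_eq, ← Function.iterate_succ_apply,
      ballMean_eq b (contDiff_slice (hiter (j + 1)) τ), laplacianAlong_slice (hiter (j + 1)),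
      ← Function.iterate_succ_apply' (laplacianAlong _), hk]
    push_cast
    ring

end IsWaveSolution

end WaveEquation

section SupportOfSolutions

open scoped Nat

variable {E : Type*} [NormedAddCommGroup E] [InnerProductSpace ℝ E] {g : E → ℝ} {R : ℝ}

theorem comp_add_smul_eq_zero_of_far (hg : tsupport g ⊆ closedBall 0 R) {x z : E} {t : ℝ}
    (hx : |t| + R < ‖x‖) (hz : ‖z‖ ≤ 1) : g (x + t • z) = 0 := by
  refine image_eq_zero_of_notMem_tsupport fun h => hx.not_ge ?_
  have hR : ‖x + t • z‖ ≤ R := by simpa using hg h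
  have htz : ‖t • z‖ ≤ |t| := by
    rw [norm_smul, Real.norm_eq_abs]
    exact mul_le_of_le_one_right (abs_nonneg t) hz
  have := norm_sub_le (x + t • z) (t • z)
  rw [add_sub_cancel_right] at this
  linarith

theorem comp_add_smul_eq_zero_of_near (hg : tsupport g ⊆ closedBall 0 R) {x z : E} {t : ℝ}
    (hx : ‖x‖ < t - R) (hz : 1 ≤ ‖z‖) : g (x + t • z) = 0 := by
  refine image_eq_zero_of_notMem_tsupport fun h => hx.not_ge ?_
  have hR : ‖x + t • z‖ ≤ R := by simpa using hg h
  have htz : t ≤ ‖t • z‖ := by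
    rw [norm_smul, Real.norm_eq_abs]
    exact (le_abs_self t).trans (le_mul_of_one_le_right (abs_nonneg t) hz)
  have := norm_sub_le (x + t • z) x
  rw [add_sub_cancel_left] at this
  linarith

variable [FiniteDimensional ℝ E] [MeasurableSpace E] [BorelSpace E]

theorem ballMean_eq_zero (hg : tsupport g ⊆ closedBall 0 R) {n : ℕ} (hn : n ≠ 0) {x : E} {t : ℝ}
    (hx : |t| + R < ‖x‖) : ballMean n g x t = 0 := by
  refine integral_eq_zero_of_ae (Eventually.of_forall fun z => ?_)
  rcases le_total ‖z‖ 1 with hz | hz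
  · simp [comp_add_smul_eq_zero_of_far hg hx hz]
  · simp [posDividedPow_kernel_of_one_le hn hz]

theorem ballMean_eq_integral_shiftedDividedPow (hg : tsupport g ⊆ closedBall 0 R) {x : E} {t : ℝ}
    (hx : ‖x‖ < t - R) (k n : ℕ) :
    ballMean n g x t = ∫ z, shiftedDividedPow k (k + n) ((1 - ‖z‖ ^ 2) / 2) * g (x + t • z) := by
  refine integral_congr_ae (Eventually.of_forall fun z => ?_)
  rcases le_total 1 ‖z‖ with hz | hz
  · simp [comp_add_smul_eq_zero_of_near hg hx hz]
  · simp only [shiftedDividedPow_add]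
    rw [posDividedPow_of_nonneg]
    nlinarith [norm_nonneg z]

variable {ι : Type*} [Fintype ι] {b : OrthonormalBasis ι ℝ E}

theorem doubleFactorial_mul_sum_ballMean (hg : ContDiff ℝ ∞ g) (hgR : tsupport g ⊆ closedBall 0 R)
    {k : ℕ} (hk : Module.finrank ℝ E = 2 * k + 1) {x : E} {t : ℝ} (hx : ‖x‖ < t - R) :
    (2 * (k + 1) + 1)‼ * ∑ j ∈ Finset.range (k + 2), kirchhoffCoeff (k + 1) j *
        (t ^ (2 * j) * ballMean (j + 1) ((laplacianAlong b)^[j] g) x t) =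
      ∫ z : E, shiftedDividedPow k 0 ((1 - ‖z‖ ^ 2) / 2) * g (x + t • z) := by
  have hgj (j : ℕ) : tsupport ((laplacianAlong b)^[j] g) ⊆ closedBall 0 R :=
    (tsupport_iterate_laplacianAlong_subset g j).trans hgR
  let f (z : E) : ℝ := g (x + t • z)
  have hf : ContDiff ℝ ∞ f := by fun_prop
  have hfj (j : ℕ) (z : E) (hz : 1 ≤ ‖z‖) : (laplacianAlong b)^[j] f z = 0 := by
    simp only [f, iterate_laplacianAlong_comp_add_smul,
      comp_add_smul_eq_zero_of_near (hgj j) hx hz, mul_zero]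
  let a (j n : ℕ) : ℝ :=
    ∫ z : E, shiftedDividedPow k n ((1 - ‖z‖ ^ 2) / 2) * (laplacianAlong b)^[j] f z
  have ha (j n : ℕ) : a j n = (2 * n + 3) * a j (n + 1) + a (j + 1) (n + 2) := by
    have hsupp : HasCompactSupport ((laplacianAlong b)^[j] f) :=
      HasCompactSupport.intro (isCompact_closedBall 0 1) fun z hz =>
        hfj j z (not_le.1 (by simpa using hz)).le
    have := (isDividedPowerFamily_shiftedDividedPow k).integral_kernel_mul
      (contDiff_iterate_laplacianAlong hf j) (fun n => hsupp.mul_left) b n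
    rw [hk, ← Function.iterate_succ_apply' (laplacianAlong b)] at this
    push_cast at this
    linear_combination (exp := 1) this
  refine Eq.trans (congrArg _ (Finset.sum_congr rfl fun j _ => ?_))
    (doubleFactorial_mul_sum_kirchhoffCoeff ha (k + 1))
  rw [ballMean_eq_integral_shiftedDividedPow (hgj j) hx k, ← integral_const_mul,
    show k + (j + 1) = k + 1 + j by ring]
  simp only [a, f, iterate_laplacianAlong_comp_add_smul, mul_left_comm]

namespace IsWaveSolution

variable {U : ℝ × E → ℝ}

theorem kirchhoff_formula_of_position_eq_zero (hU : IsWaveSolution b U)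
    (hpos : ∀ x, U (0, x) = 0) {k : ℕ} (hk : Module.finrank ℝ E = 2 * k + 1) (t : ℝ) (x : E) :
    (∫ z : E, posDividedPow 1 ((1 - ‖z‖ ^ 2) / 2)) * U (t, x) =
      t * ∑ j ∈ Finset.range (k + 2), kirchhoffCoeff (k + 1) j * (t ^ (2 * j) *
        ballMean (j + 1) ((laplacianAlong b)^[j] fun y => dirDeriv (1, 0) U (0, y)) x t) := by
  have iterate_zero (j : ℕ) : (laplacianAlong b)^[j] (fun y => U (0, y)) = fun _ => 0 := by
    rw [funext hpos]
    exact Function.iterate_fixed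
      (by simpa using laplacianAlong_const_mul (e := b) 0 fun _ : E => (0 : ℝ)) j
  rw [hU.kirchhoff_formula hk]
  simp only [kirchhoffSum, iterate_zero, ballMean, mul_zero, integral_zero, add_zero,
    Finset.mul_sum]
  exact Finset.sum_congr rfl fun j _ => by ring

theorem finite_speed (hU : IsWaveSolution b U) (hpos : ∀ x, U (0, x) = 0)
    (hvel : tsupport (fun x => dirDeriv (1, 0) U (0, x)) ⊆ closedBall 0 R)
    (hodd : Odd (Module.finrank ℝ E)) {t : ℝ} {x : E} (hx : |t| + R < ‖x‖) : U (t, x) = 0 := by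
  obtain ⟨k, hk⟩ := hodd
  have formula := hU.kirchhoff_formula_of_position_eq_zero hpos hk t x
  simp only [ballMean_eq_zero ((tsupport_iterate_laplacianAlong_subset _ _).trans hvel)
    (Nat.succ_ne_zero _) hx, mul_zero, Finset.sum_const_zero] at formula
  exact (mul_eq_zero.1 formula).resolve_left integral_posDividedPow_one_kernel_pos.ne'

/-- The constant vanishes in dimension at least `3`, where `shiftedDividedPow k 0 = 0`; in
dimension `1` it is half the mass of the initial velocity. -/
theorem exists_eq_const_of_norm_lt (hU : IsWaveSolution b U) (hpos : ∀ x, U (0, x) = 0)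
    (hvel : tsupport (fun x => dirDeriv (1, 0) U (0, x)) ⊆ closedBall 0 R)
    (hR : 0 ≤ R) (hodd : Odd (Module.finrank ℝ E)) :
    ∃ c, ∀ t x, ‖x‖ < t - R → U (t, x) = c := by
  obtain ⟨k, hk⟩ := hodd
  set g : E → ℝ := fun x => dirDeriv (1, 0) U (0, x)
  have hg : ContDiff ℝ ∞ g := contDiff_slice (hU.dirDeriv (1, 0)).contDiff 0
  let κ : ℝ := ∫ z : E, posDividedPow 1 ((1 - ‖z‖ ^ 2) / 2)
  have hκ : κ ≠ 0 := integral_posDividedPow_one_kernel_pos.ne'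
  have hfact : ((2 * (k + 1) + 1)‼ : ℝ) ≠ 0 := by exact_mod_cast (Nat.doubleFactorial_pos _).ne'
  have mass (t : ℝ) (x : E) (hx : ‖x‖ < t - R) :
      t * (∫ z : E, shiftedDividedPow k 0 ((1 - ‖z‖ ^ 2) / 2) * g (x + t • z)) =
        shiftedDividedPow k 0 0 * ∫ y, g y := by
    have ht : 0 < t := by linarith [norm_nonneg x]
    rcases Nat.eq_zero_or_pos k with rfl | hk0
    · have := Measure.integral_comp_smul volume (fun w => g (x + w)) t
      rw [integral_add_left_eq_self, hk] at this
      simp [shiftedDividedPow, this, abs_of_pos ht, ht.ne']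
    · simp [shiftedDividedPow_of_lt hk0]
  refine ⟨(shiftedDividedPow k 0 0 * ∫ y, g y) / (κ * (2 * (k + 1) + 1)‼), fun t x hx => ?_⟩
  rw [eq_div_iff (mul_ne_zero hκ hfact), ← mass t x hx,
    ← doubleFactorial_mul_sum_ballMean (b := b) hg hvel hk hx]
  linear_combination ((2 * (k + 1) + 1)‼ : ℝ) *
    hU.kirchhoff_formula_of_position_eq_zero hpos hk t x

theorem dirDeriv_eq_zero_of_far (hU : IsWaveSolution b U) (hpos : ∀ x, U (0, x) = 0)
    (hvel : tsupport (fun x => dirDeriv (1, 0) U (0, x)) ⊆ closedBall 0 R)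
    (hodd : Odd (Module.finrank ℝ E)) (v : ℝ × E) {t : ℝ} {x : E} (hx : |t| + R < ‖x‖) :
    dirDeriv v U (t, x) = 0 :=
  dirDeriv_eqOn_zero (s := {p | |p.1| + R < ‖p.2‖}) (isOpen_lt (by fun_prop) (by fun_prop))
    (fun _ hp => hU.finite_speed hpos hvel hodd hp) v hx

theorem dirDeriv_eq_zero_of_near (hU : IsWaveSolution b U) (hpos : ∀ x, U (0, x) = 0)
    (hvel : tsupport (fun x => dirDeriv (1, 0) U (0, x)) ⊆ closedBall 0 R)
    (hR : 0 ≤ R) (hodd : Odd (Module.finrank ℝ E)) (v : ℝ × E) {t : ℝ} {x : E}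
    (hx : ‖x‖ < t - R) : dirDeriv v U (t, x) = 0 := by
  obtain ⟨c, hc⟩ := hU.exists_eq_const_of_norm_lt hpos hvel hR hodd
  exact dirDeriv_eqOn_zero (s := {p : ℝ × E | ‖p.2‖ < p.1 - R})
    (isOpen_lt (by fun_prop) (by fun_prop))
    (fun p hp => hc p.1 p.2 hp) v hx

end IsWaveSolution

end SupportOfSolutions

section Energy

variable {E : Type*} [NormedAddCommGroup E] [InnerProductSpace ℝ E] {ι : Type*} [Fintype ι]
  {b : OrthonormalBasis ι ℝ E} {U : ℝ × E → ℝ} {R : ℝ}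

/-- Twice the energy density of the wave equation: `|∇U|² + (∂ₜU)²`, the gradient being written in
the orthonormal basis `b`. -/
def energyDensity (b : OrthonormalBasis ι ℝ E) (U : ℝ × E → ℝ) (p : ℝ × E) : ℝ :=
  ∑ i, dirDeriv (0, b i) U p ^ 2 + dirDeriv (1, 0) U p ^ 2

theorem continuous_energyDensity (hU : ContDiff ℝ ∞ U) : Continuous (energyDensity b U) := by
  have (v : ℝ × E) : Continuous (dirDeriv v U) := continuous_dirDeriv (hU.of_le (by simp)) v
  unfold energyDensity
  fun_prop

theorem energyDensity_eq_zero {p : ℝ × E} (h : ∀ v, dirDeriv v U p = 0) :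
    energyDensity b U p = 0 := by
  simp [energyDensity, h]

namespace IsWaveSolution

theorem hasDerivAt_energyDensity (hU : IsWaveSolution b U) (t : ℝ) (x : E) :
    HasDerivAt (fun t => energyDensity b U (t, x))
      (2 * ∑ i, (dirDeriv (0, b i) U (t, x) * dirDeriv (0, b i) (dirDeriv (1, 0) U) (t, x) +
        dirDeriv (0, b i) (dirDeriv (0, b i) U) (t, x) * dirDeriv (1, 0) U (t, x))) t := by
  have square (v : ℝ × E) : HasDerivAt (fun t => dirDeriv v U (t, x) ^ 2)
      (2 * (dirDeriv v U (t, x) * dirDeriv v (dirDeriv (1, 0) U) (t, x))) t := by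
    rw [dirDeriv_comm (contDiff_infty.1 hU.contDiff 2)]
    refine ((hasDerivAt_time_slice (hU.dirDeriv v).differentiable t x).fun_pow 2).congr_deriv ?_
    push_cast
    ring
  refine ((HasDerivAt.fun_sum fun i _ => square (0, b i)).add (square (1, 0))).congr_deriv ?_
  rw [hU.wave_eq, Finset.sum_add_distrib, ← Finset.sum_mul, mul_add, Finset.mul_sum,
    laplacianAlong]
  ring

variable [FiniteDimensional ℝ E] [MeasurableSpace E] [BorelSpace E]

/-- The fluxes are divergences: the `i`-th term is the derivative of `∂ᵢU ∂ₜU` along `b i`. -/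
theorem integral_energy_flux (hU : IsWaveSolution b U)
    (hsupp : ∀ v, ∀ t x, |t| + R < ‖x‖ → dirDeriv v U (t, x) = 0) (t : ℝ) :
    ∫ x, 2 * ∑ i, (dirDeriv (0, b i) U (t, x) *
        dirDeriv (0, b i) (dirDeriv (1, 0) U) (t, x) +
      dirDeriv (0, b i) (dirDeriv (0, b i) U) (t, x) *
        dirDeriv (1, 0) U (t, x)) = 0 := by
  have hcompact (v : ℝ × E) : HasCompactSupport fun x => dirDeriv v U (t, x) :=
    HasCompactSupport.intro (isCompact_closedBall 0 (|t| + R)) fun x hx =>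
      hsupp v t x (not_le.1 (by simpa using hx))
  have hdt := contDiff_slice (hU.dirDeriv (1, 0)).contDiff t
  have hdx (i : ι) := contDiff_slice (hU.dirDeriv (0, b i)).contDiff t
  have hdtx (i : ι) := contDiff_slice ((hU.dirDeriv (1, 0)).dirDeriv (0, b i)).contDiff t
  have hdxx (i : ι) := contDiff_slice ((hU.dirDeriv (0, b i)).dirDeriv (0, b i)).contDiff t
  have hint (i : ι) : Integrable fun x => dirDeriv (0, b i) U (t, x) *
      dirDeriv (0, b i) (dirDeriv (1, 0) U) (t, x) :=
    ((hdx i).continuous.mul (hdtx i).continuous).integrable_of_hasCompactSupport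
      (hcompact (0, b i)).mul_right
  have hint' (i : ι) : Integrable fun x => dirDeriv (0, b i) (dirDeriv (0, b i) U) (t, x) *
      dirDeriv (1, 0) U (t, x) :=
    ((hdxx i).continuous.mul hdt.continuous).integrable_of_hasCompactSupport
      (hcompact (1, 0)).mul_left
  rw [integral_const_mul, integral_finsetSum _ fun i _ => (hint i).fun_add (hint' i),
    Finset.sum_eq_zero fun i _ => ?_, mul_zero]
  have parts := integral_mul_dirDeriv (μ := volume) ((hdx i).of_le (by simp))
    (hdt.of_le (by simp)) (hcompact (0, b i)).mul_right (b i)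
  rw [dirDeriv_slice (hU.dirDeriv _).differentiable,
    dirDeriv_slice (hU.dirDeriv _).differentiable] at parts
  rw [integral_add (hint i) (hint' i), parts, neg_add_cancel]

theorem integral_energyDensity_eq (hU : IsWaveSolution b U)
    (hsupp : ∀ v, ∀ t x, |t| + R < ‖x‖ → dirDeriv v U (t, x) = 0) (s t : ℝ) :
    ∫ x, energyDensity b U (s, x) = ∫ x, energyDensity b U (t, x) := by
  have stationary (t : ℝ) : HasDerivAt (fun t => ∫ x, energyDensity b U (t, x)) 0 t := by
    have hcont := continuous_energyDensity (b := b) hU.contDiff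
    have hcontd : Continuous fun p : ℝ × E => 2 * ∑ i, (dirDeriv (0, b i) U (p.1, p.2) *
          dirDeriv (0, b i) (dirDeriv (1, 0) U) (p.1, p.2) +
        dirDeriv (0, b i) (dirDeriv (0, b i) U) (p.1, p.2) *
          dirDeriv (1, 0) U (p.1, p.2)) := by
      have hd (v : ℝ × E) := (hU.dirDeriv v).contDiff.continuous
      have hdd (v w : ℝ × E) := ((hU.dirDeriv w).dirDeriv v).contDiff.continuous
      fun_prop
    have outside (s : ℝ) (hs : |s| < |t| + 1) (x : E) (hx : x ∉ closedBall 0 (|t| + 1 + R))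
        (v : ℝ × E) : dirDeriv v U (s, x) = 0 := by
      have : |t| + 1 + R < ‖x‖ := not_le.1 (by simpa using hx)
      exact hsupp v s x (by linarith)
    refine (hasDerivAt_integral_of_continuous_deriv (isCompact_closedBall 0 (|t| + 1 + R))
      (fun t x => hU.hasDerivAt_energyDensity t x)
      (fun t => (hcont.comp (by fun_prop : Continuous fun x : E => (t, x))).aestronglyMeasurable)
      ((hcont.comp (by fun_prop : Continuous fun x : E => (t, x))).integrable_of_hasCompactSupport
        (HasCompactSupport.intro (isCompact_closedBall 0 (|t| + 1 + R)) fun x hx => ?_)) hcontd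
      (hcontd.comp (by fun_prop : Continuous fun x : E => (t, x))).aestronglyMeasurable
      ?_).congr_deriv (hU.integral_energy_flux hsupp t)
    · exact energyDensity_eq_zero (outside t (by linarith) x hx)
    · filter_upwards [continuous_abs.continuousAt.eventually_lt_const
        (show |t| < |t| + 1 by linarith)] with s hs x hx
      simp [outside s hs x hx]
  exact is_const_of_deriv_eq_zero (fun t => (stationary t).differentiableAt)
    (fun t => (stationary t).deriv) s t

theorem integral_energyDensity_of_position_eq_zero (hU : IsWaveSolution b U)
    (hpos : ∀ x, U (0, x) = 0)
    (hsupp : ∀ v, ∀ t x, |t| + R < ‖x‖ → dirDeriv v U (t, x) = 0) (t : ℝ) :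
    ∫ x, energyDensity b U (t, x) = ∫ x, dirDeriv (1, 0) U (0, x) ^ 2 := by
  rw [hU.integral_energyDensity_eq hsupp t 0]
  refine integral_congr_ae (Eventually.of_forall fun x => ?_)
  have spatial (i : ι) : dirDeriv (0, b i) U (0, x) = 0 := by
    rw [← congrFun (dirDeriv_slice hU.differentiable (b i) 0) x, funext hpos]
    simp [dirDeriv]
  simp [energyDensity, spatial]

end IsWaveSolution

end Energy

section BoundedConvergence

variable {α X : Type*} {F G : α → X → ℝ} {L M : X → ℝ} {l : Filter α} {S : Set X}

/-- Pointwise convergence of `F` to `L` on `S` with values eventually bounded uniformly on `S`, so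
that the bounded convergence theorem applies to integrals over `S`. -/
structure TendstoBoundedlyOn (F : α → X → ℝ) (L : X → ℝ) (l : Filter α) (S : Set X) : Prop where
  bounded : ∃ C, ∀ᶠ t in l, ∀ x ∈ S, |F t x| ≤ C
  tendsto : ∀ x ∈ S, Tendsto (fun t => F t x) l (nhds (L x))

namespace TendstoBoundedlyOn

theorem of_tendsto {f : α → ℝ} {a : ℝ} (h : Tendsto f l (nhds a)) (S : Set X) :
    TendstoBoundedlyOn (fun t _ => f t) (fun _ => a) l S where
  bounded := ⟨|a| + 1, (h.abs.eventually_le_const (by linarith)).mono fun _ ht _ _ => ht⟩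
  tendsto _ _ := h

theorem add (hF : TendstoBoundedlyOn F L l S) (hG : TendstoBoundedlyOn G M l S) :
    TendstoBoundedlyOn (fun t x => F t x + G t x) (fun x => L x + M x) l S where
  bounded := by
    obtain ⟨C, hC⟩ := hF.bounded
    obtain ⟨D, hD⟩ := hG.bounded
    refine ⟨C + D, ?_⟩
    filter_upwards [hC, hD] with t hCt hDt x hx
    exact (abs_add_le _ _).trans (add_le_add (hCt x hx) (hDt x hx))
  tendsto x hx := (hF.tendsto x hx).add (hG.tendsto x hx)

theorem mul (hF : TendstoBoundedlyOn F L l S) (hG : TendstoBoundedlyOn G M l S) :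
    TendstoBoundedlyOn (fun t x => F t x * G t x) (fun x => L x * M x) l S where
  bounded := by
    obtain ⟨C, hC⟩ := hF.bounded
    obtain ⟨D, hD⟩ := hG.bounded
    refine ⟨C * D, ?_⟩
    filter_upwards [hC, hD] with t hCt hDt x hx
    rw [abs_mul]
    exact mul_le_mul (hCt x hx) (hDt x hx) (abs_nonneg _) ((abs_nonneg _).trans (hCt x hx))
  tendsto x hx := (hF.tendsto x hx).mul (hG.tendsto x hx)

theorem const_mul (hF : TendstoBoundedlyOn F L l S) (c : ℝ) :
    TendstoBoundedlyOn (fun t x => c * F t x) (fun x => c * L x) l S :=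
  (of_tendsto tendsto_const_nhds S).mul hF

theorem sum {ι : Type*} {s : Finset ι} {F : ι → α → X → ℝ} {L : ι → X → ℝ}
    (h : ∀ i ∈ s, TendstoBoundedlyOn (F i) (L i) l S) :
    TendstoBoundedlyOn (fun t x => ∑ i ∈ s, F i t x) (fun x => ∑ i ∈ s, L i x) l S := by
  induction s using Finset.cons_induction with
  | empty => simpa using of_tendsto (tendsto_const_nhds (x := (0 : ℝ))) S
  | cons a s ha ih =>
    simp only [Finset.sum_cons]
    exact (h a (Finset.mem_cons_self a s)).add
      (ih fun i hi => h i (Finset.mem_cons_of_mem hi))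

theorem congr (hF : TendstoBoundedlyOn F L l S) (hFG : ∀ᶠ t in l, ∀ x ∈ S, F t x = G t x)
    (hLM : ∀ x ∈ S, L x = M x) : TendstoBoundedlyOn G M l S where
  bounded := by
    obtain ⟨C, hC⟩ := hF.bounded
    refine ⟨C, ?_⟩
    filter_upwards [hC, hFG] with t hCt hFGt x hx
    exact hFGt x hx ▸ hCt x hx
  tendsto x hx := hLM x hx ▸ (hF.tendsto x hx).congr' (hFG.mono fun t h => h x hx)

end TendstoBoundedlyOn

end BoundedConvergence

section HalfSpaceMoments

theorem posDividedPow_mono (n : ℕ) : Monotone (posDividedPow n) := fun x y h => by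
  unfold posDividedPow
  gcongr

theorem posDividedPow_mul (n : ℕ) {r : ℝ} (hr : 0 ≤ r) (s : ℝ) :
    posDividedPow n (r * s) = r ^ n * posDividedPow n s := by
  rw [posDividedPow, posDividedPow, ← mul_div_assoc, ← mul_pow, mul_max_of_nonneg _ _ hr, mul_zero]

theorem posDividedPow_nonneg (n : ℕ) (s : ℝ) : 0 ≤ posDividedPow n s := by
  unfold posDividedPow
  positivity

variable {E : Type*} [NormedAddCommGroup E] [InnerProductSpace ℝ E]

theorem sq_sub_norm_sub_smul_sq_div (t s : ℝ) (ht : t ≠ 0) {θ : E} (hθ : ‖θ‖ = 1) (y : E) :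
    (t ^ 2 - ‖y - (t + s) • θ‖ ^ 2) / (2 * t) =
      ⟪θ, y⟫_ℝ - s - (‖y‖ ^ 2 + s ^ 2 - 2 * s * ⟪θ, y⟫_ℝ) / 2 / t := by
  rw [norm_sub_sq_real, norm_smul, inner_smul_right, real_inner_comm, hθ, Real.norm_eq_abs,
    mul_one, sq_abs]
  field_simp
  ring

theorem sq_sub_norm_sub_smul_sq_div_le {t : ℝ} (ht : 0 < t) (s : ℝ) {θ : E} (hθ : ‖θ‖ = 1)
    (y : E) : (t ^ 2 - ‖y - (t + s) • θ‖ ^ 2) / (2 * t) ≤ ‖y‖ - s := by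
  have hy : ⟪θ, y⟫_ℝ ≤ ‖y‖ := by simpa [hθ] using real_inner_le_norm θ y
  have hsq : 0 ≤ ‖y - s • θ‖ ^ 2 := by positivity
  rw [norm_sub_sq_real, norm_smul, inner_smul_right, real_inner_comm, hθ, Real.norm_eq_abs,
    mul_one, sq_abs] at hsq
  rw [sq_sub_norm_sub_smul_sq_div t s ht.ne' hθ]
  have : 0 ≤ (‖y‖ ^ 2 + s ^ 2 - 2 * s * ⟪θ, y⟫_ℝ) / 2 / t := by
    apply div_nonneg _ ht.le
    linarith
  linarith

variable [FiniteDimensional ℝ E] [MeasurableSpace E] [BorelSpace E] {g : E → ℝ}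

/-- The `n`-th divided moment of `g` over the half-space `⟪θ, y⟫ ≥ s`. Up to a factor, it is the
limit of the means `ballMean n g` over the balls centred at `(t + s) • θ` whose boundary contains
`s • θ`, as these balls fill the half-space. -/
def halfSpaceMoment (n : ℕ) (g : E → ℝ) (s : ℝ) (θ : E) : ℝ :=
  ∫ y, posDividedPow n (⟪θ, y⟫_ℝ - s) * g y

theorem pow_mul_ballMean (n : ℕ) (g : E → ℝ) (x : E) {r : ℝ} (hr : 0 < r) :
    r ^ (Module.finrank ℝ E + n) * ballMean n g x r =
      ∫ y, posDividedPow n ((r ^ 2 - ‖y - x‖ ^ 2) / (2 * r)) * g y := by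
  have dilate := Measure.integral_comp_smul volume
    (fun y => posDividedPow n ((r ^ 2 - ‖y‖ ^ 2) / (2 * r)) * g (x + y)) r
  have translate := integral_add_left_eq_self (μ := volume)
    (fun y => posDividedPow n ((r ^ 2 - ‖y - x‖ ^ 2) / (2 * r)) * g y) x
  have kernel (z : E) : posDividedPow n ((r ^ 2 - ‖r • z‖ ^ 2) / (2 * r)) =
      r ^ n * posDividedPow n ((1 - ‖z‖ ^ 2) / 2) := by
    rw [← posDividedPow_mul n hr.le, norm_smul, mul_pow, Real.norm_eq_abs, sq_abs]
    congr 1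
    field_simp
  simp only [add_sub_cancel_left] at translate
  simp only [kernel, mul_assoc, integral_const_mul, translate, smul_eq_mul,
    abs_of_pos (inv_pos.2 (pow_pos hr (Module.finrank ℝ E)))] at dilate
  rw [ballMean, pow_add, mul_assoc, dilate, mul_inv_cancel_left₀ (pow_pos hr _).ne']

theorem tendstoBoundedlyOn_pow_mul_ballMean (hg : Continuous g) (hgc : HasCompactSupport g)
    (n : ℕ) (ρ : ℝ) : TendstoBoundedlyOn
      (fun t (p : ℝ × E) =>
        t ^ (Module.finrank ℝ E + n) * ballMean n g ((t + p.1) • p.2) t)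
      (fun p => halfSpaceMoment n g p.1 p.2) atTop (Icc (-ρ) ρ ×ˢ sphere 0 1) := by
  have hbound : Integrable fun y => posDividedPow n (‖y‖ + ρ) * ‖g y‖ :=
    (((continuous_posDividedPow n).comp (by fun_prop)).mul
      hg.norm).integrable_of_hasCompactSupport hgc.norm.mul_left
  have dominated {t : ℝ} (ht : 0 < t) {p : ℝ × E} (hp : p ∈ Icc (-ρ) ρ ×ˢ sphere (0 : E) 1)
      (y : E) : ‖posDividedPow n ((t ^ 2 - ‖y - (t + p.1) • p.2‖ ^ 2) / (2 * t)) * g y‖ ≤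
        posDividedPow n (‖y‖ + ρ) * ‖g y‖ := by
    rw [norm_mul, Real.norm_of_nonneg (posDividedPow_nonneg _ _)]
    refine mul_le_mul_of_nonneg_right (posDividedPow_mono n ?_) (norm_nonneg _)
    have := sq_sub_norm_sub_smul_sq_div_le ht p.1 (mem_sphere_zero_iff_norm.1 hp.2) y
    linarith [hp.1.1]
  refine ⟨⟨∫ y, posDividedPow n (‖y‖ + ρ) * ‖g y‖, ?_⟩, fun p hp => ?_⟩
  · filter_upwards [eventually_gt_atTop 0] with t ht p hp
    rw [pow_mul_ballMean _ _ _ ht]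
    exact norm_integral_le_of_norm_le hbound (Eventually.of_forall (dominated ht hp))
  · refine (tendsto_integral_filter_of_dominated_convergence
      (F := fun t y => posDividedPow n ((t ^ 2 - ‖y - (t + p.1) • p.2‖ ^ 2) / (2 * t)) * g y)
      _ ?_ ?_ hbound ?_).congr' ?_
    · exact Eventually.of_forall fun t => (((continuous_posDividedPow n).comp
        (by fun_prop)).mul hg).aestronglyMeasurable
    · filter_upwards [eventually_gt_atTop 0] with t ht
      exact Eventually.of_forall (dominated ht hp)
    · refine Eventually.of_forall fun y => Tendsto.mul_const _
        (((continuous_posDividedPow n).tendsto _).comp ?_)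
      have limit := (tendsto_const_nhds (x := ⟪p.2, y⟫_ℝ - p.1)).sub
        (tendsto_id.const_div_atTop ((‖y‖ ^ 2 + p.1 ^ 2 - 2 * p.1 * ⟪p.2, y⟫_ℝ) / 2))
      rw [sub_zero] at limit
      refine limit.congr' ?_
      filter_upwards [eventually_ne_atTop 0] with t ht
      exact (sq_sub_norm_sub_smul_sq_div t p.1 ht (mem_sphere_zero_iff_norm.1 hp.2) y).symm
    · filter_upwards [eventually_gt_atTop 0] with t ht
      exact (pow_mul_ballMean _ _ _ ht).symm

/-- All moments of `f` of order less than `m`, in all directions and about all hyperplanes,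
vanish. -/
def HasVanishingMoments (m : ℕ) (f : E → ℝ) : Prop :=
  ∀ n < m, ∀ (θ : E) (s : ℝ), ∫ y, (⟪θ, y⟫_ℝ - s) ^ n * f y = 0

theorem hasVanishingMoments_zero (f : E → ℝ) : HasVanishingMoments 0 f := fun n hn => by
  simp at hn

theorem hasVanishingMoments_dirDeriv {m : ℕ} {f : E → ℝ} (hf : ContDiff ℝ 1 f)
    (hfc : HasCompactSupport f) (h : HasVanishingMoments m f) (v : E) :
    HasVanishingMoments (m + 1) (dirDeriv v f) := by
  intro n hn θ s
  have hpoly : ContDiff ℝ 1 fun y => (⟪θ, y⟫_ℝ - s) ^ n :=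
    ((contDiff_const.inner ℝ contDiff_id).sub contDiff_const).pow n
  have hd (y : E) : dirDeriv v (fun y => (⟪θ, y⟫_ℝ - s) ^ n) y =
      n * ⟪θ, v⟫_ℝ * (⟪θ, y⟫_ℝ - s) ^ (n - 1) := by
    have := (((innerSL ℝ θ).hasFDerivAt (x := y)).sub_const s).pow n
    simp only [innerSL_apply_apply] at this
    rw [dirDeriv, this.fderiv]
    simp
    ring
  rw [integral_mul_dirDeriv hpoly hf hfc.mul_left, neg_eq_zero]
  simp only [hd, mul_assoc, integral_const_mul]
  rcases n.eq_zero_or_pos with rfl | hpos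
  · simp
  · rw [h (n - 1) (by omega), mul_zero, mul_zero]

variable {ι : Type*} [Fintype ι] {b : ι → E}

theorem hasVanishingMoments_laplacianAlong {m : ℕ} {f : E → ℝ} (hf : ContDiff ℝ ∞ f)
    (hfc : HasCompactSupport f) (h : HasVanishingMoments m f) :
    HasVanishingMoments (m + 2) (laplacianAlong b f) := by
  intro n hn θ s
  have hd (i : ι) := contDiff_dirDeriv hf (b i)
  have hdc (i : ι) : HasCompactSupport (dirDeriv (b i) f) :=
    hfc.mono' (subset_closure.trans (tsupport_dirDeriv_subset _ _))
  simp only [laplacianAlong, Finset.mul_sum]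
  rw [integral_finsetSum]
  · exact Finset.sum_eq_zero fun i _ => hasVanishingMoments_dirDeriv ((hd i).of_le (by simp))
      (hdc i) (hasVanishingMoments_dirDeriv (hf.of_le (by simp)) hfc h _) _ n hn θ s
  · have hdd (i : ι) := (contDiff_dirDeriv (hd i) (b i)).continuous
    exact fun i _ => Continuous.integrable_of_hasCompactSupport (by fun_prop)
      ((hdc i).mono' (subset_closure.trans (tsupport_dirDeriv_subset _ _))).mul_left

theorem hasVanishingMoments_iterate_laplacianAlong {m : ℕ} {f : E → ℝ} (hf : ContDiff ℝ ∞ f)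
    (hfc : HasCompactSupport f) (h : HasVanishingMoments m f) (n : ℕ) :
    HasVanishingMoments (m + 2 * n) ((laplacianAlong b)^[n] f) := by
  induction n with
  | zero => exact h
  | succ n ih =>
    rw [Function.iterate_succ_apply']
    exact hasVanishingMoments_laplacianAlong (contDiff_iterate_laplacianAlong hf n)
      (hfc.mono' (subset_closure.trans (tsupport_iterate_laplacianAlong_subset f n))) ih

theorem posDividedPow_add_neg_one_pow_mul {n : ℕ} (hn : n ≠ 0) (s : ℝ) :
    posDividedPow n s + (-1) ^ n * posDividedPow n (-s) = s ^ n / n.factorial := by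
  rcases le_total 0 s with h | h
  · rw [posDividedPow_of_nonneg n h, posDividedPow_of_nonpos hn (neg_nonpos.2 h)]
    simp
  · rw [posDividedPow_of_nonpos hn h, posDividedPow_of_nonneg n (neg_nonneg.2 h),
      ← mul_div_assoc, ← mul_pow]
    simp

theorem halfSpaceMoment_neg_neg {m n : ℕ} (hg : Continuous g) (hgc : HasCompactSupport g)
    (h : HasVanishingMoments m g) (hn : n ≠ 0) (hnm : n < m) (s : ℝ) (θ : E) :
    halfSpaceMoment n g s θ = -((-1) ^ n * halfSpaceMoment n g (-s) (-θ)) := by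
  have hint (s : ℝ) (θ : E) : Integrable fun y => posDividedPow n (⟪θ, y⟫_ℝ - s) * g y :=
    (((continuous_posDividedPow n).comp (by fun_prop)).mul
      hg).integrable_of_hasCompactSupport hgc.mul_left
  have split (y : E) : posDividedPow n (⟪θ, y⟫_ℝ - s) * g y +
      (-1) ^ n * (posDividedPow n (⟪-θ, y⟫_ℝ - -s) * g y) =
      (n.factorial : ℝ)⁻¹ * ((⟪θ, y⟫_ℝ - s) ^ n * g y) := by
    rw [inner_neg_left, neg_sub_neg, ← neg_sub ⟪θ, y⟫_ℝ s, ← mul_assoc, ← add_mul,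
      posDividedPow_add_neg_one_pow_mul hn]
    ring
  rw [eq_neg_iff_add_eq_zero, halfSpaceMoment, halfSpaceMoment, ← integral_const_mul,
    ← integral_add (hint s θ) ((hint (-s) (-θ)).const_mul _)]
  simp only [split, integral_const_mul, h n hnm, mul_zero]

theorem halfSpaceMoment_neg_neg_sq {m n : ℕ} (hg : Continuous g) (hgc : HasCompactSupport g)
    (h : HasVanishingMoments m g) (hn : n ≠ 0) (hnm : n < m) (s : ℝ) (θ : E) :
    halfSpaceMoment n g (-s) (-θ) ^ 2 = halfSpaceMoment n g s θ ^ 2 := by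
  rw [halfSpaceMoment_neg_neg hg hgc h hn hnm s θ, neg_sq, mul_pow, ← pow_mul, mul_comm n,
    pow_mul, neg_one_sq, one_pow, one_mul]

end HalfSpaceMoments

section RadiationFields

variable {E : Type*} [NormedAddCommGroup E] [InnerProductSpace ℝ E] [FiniteDimensional ℝ E]
  [MeasurableSpace E] [BorelSpace E] {ι : Type*} [Fintype ι] {b : OrthonormalBasis ι ℝ E}
  {U : ℝ × E → ℝ} {k : ℕ} {R : ℝ}

/-- The radiation field of the solution `U` of the wave equation in dimension `2 * k + 1`, that is
the limit of `t ^ k * U (t, (t + s) • θ)` as `t → ∞`, expressed through the initial data of `U`. -/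
def radiationField (b : OrthonormalBasis ι ℝ E) (k : ℕ) (U : ℝ × E → ℝ) (s : ℝ) (θ : E) : ℝ :=
  (∫ z : E, posDividedPow 1 ((1 - ‖z‖ ^ 2) / 2))⁻¹ * (kirchhoffCoeff (k + 1) (k + 1) *
    (halfSpaceMoment (k + 2)
        ((laplacianAlong b)^[k + 1] fun y => dirDeriv (1, 0) U (0, y)) s θ +
      halfSpaceMoment (k + 3) ((laplacianAlong b)^[k + 2] fun y => U (0, y)) s θ))

theorem tendsto_pow_div_pow_atTop_ite {j n : ℕ} (h : j ≤ n) :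
    Tendsto (fun t : ℝ => t ^ j / t ^ n) atTop (nhds (if j = n then 1 else 0)) := by
  rcases h.eq_or_lt with rfl | h
  · rw [if_pos rfl]
    refine tendsto_const_nhds.congr' ?_
    filter_upwards [eventually_ne_atTop 0] with t ht
    exact (div_self (pow_ne_zero j ht)).symm
  · rw [if_neg h.ne]
    exact tendsto_pow_div_pow_atTop_zero h

theorem tendstoBoundedlyOn_pow_mul_ballMean_iterate_laplacianAlong {g : E → ℝ}
    (hg : ContDiff ℝ ∞ g) (hgc : HasCompactSupport g) {a j m : ℕ} (haj : a ≤ m) (i n : ℕ)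
    (hexp : Module.finrank ℝ E + n + a = m + j) (ρ : ℝ) :
    TendstoBoundedlyOn
      (fun t (p : ℝ × E) =>
        t ^ j * ballMean n ((laplacianAlong b)^[i] g) ((t + p.1) • p.2) t)
      (fun p => if a = m then halfSpaceMoment n ((laplacianAlong b)^[i] g) p.1 p.2 else 0)
      atTop (Icc (-ρ) ρ ×ˢ sphere 0 1) := by
  refine ((TendstoBoundedlyOn.of_tendsto (tendsto_pow_div_pow_atTop_ite haj) _).mul
    (tendstoBoundedlyOn_pow_mul_ballMean (contDiff_iterate_laplacianAlong (e := b) hg i).continuous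
      (hgc.mono' (subset_closure.trans (tsupport_iterate_laplacianAlong_subset g i)))
      n ρ)).congr ?_ fun p _ => by simp
  filter_upwards [eventually_ne_atTop 0] with t ht p _
  rw [← mul_assoc, div_mul_eq_mul_div, ← pow_add, add_comm a, hexp, pow_add,
    mul_div_cancel_left₀ _ (pow_ne_zero m ht)]

theorem IsWaveSolution.tendstoBoundedlyOn_radiationField (hU : IsWaveSolution b U)
    (hk : Module.finrank ℝ E = 2 * k + 1) (hpos : HasCompactSupport fun x => U (0, x))
    (hvel : HasCompactSupport fun x => dirDeriv (1, 0) U (0, x)) (ρ : ℝ) :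
    TendstoBoundedlyOn (fun t (p : ℝ × E) => t ^ k * U (t, (t + p.1) • p.2))
      (fun p => radiationField b k U p.1 p.2) atTop (Icc (-ρ) ρ ×ˢ sphere 0 1) := by
  have limit {g : E → ℝ} (hg : ContDiff ℝ ∞ g) (hgc : HasCompactSupport g) {a j m : ℕ} (haj : a ≤ m)
      (i n : ℕ) (hexp : Module.finrank ℝ E + n + a = m + j) :=
    tendstoBoundedlyOn_pow_mul_ballMean_iterate_laplacianAlong (b := b) hg hgc haj i n hexp ρ
  have hA := contDiff_slice hU.contDiff 0
  have hB := contDiff_slice (hU.dirDeriv (1, 0)).contDiff 0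
  have hκ := (integral_posDividedPow_one_kernel_pos (E := E)).ne'
  have kirchhoff_terms := TendstoBoundedlyOn.sum (s := Finset.range (k + 2)) fun j hj =>
    (((limit hB hvel (m := k + 1) (j := k + (2 * j + 1)) (Finset.mem_range_succ_iff.1 hj)
        j (j + 1) (by omega)).add
      ((limit hA hpos (m := k + 2) (j := k + 2 * j) (Finset.mem_range.1 hj).le
        j (j + 1) (by omega)).const_mul (2 * j + 1))).add
      (limit hA hpos (m := k + 1) (j := k + (2 * j + 2)) (Finset.mem_range_succ_iff.1 hj)
        (j + 1) (j + 2) (by omega))).const_mul (kirchhoffCoeff (k + 1) j)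
  refine (kirchhoff_terms.const_mul
    (∫ z : E, posDividedPow 1 ((1 - ‖z‖ ^ 2) / 2))⁻¹).congr ?_ fun p _ => ?_
  · refine Eventually.of_forall fun t p _ => ?_
    rw [inv_mul_eq_iff_eq_mul₀ hκ, mul_left_comm, hU.kirchhoff_formula hk, kirchhoffSum,
      Finset.mul_sum]
    refine Finset.sum_congr rfl fun j _ => ?_
    ring
  · rw [radiationField, Finset.sum_range_succ, Finset.sum_eq_zero]
    · simp
    · intro j hj
      have : j < k + 1 := Finset.mem_range.1 hj
      simp [this.ne, (this.trans (Nat.lt_succ_self _)).ne]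

end RadiationFields

section RadiatedEnergy

theorem tendstoBoundedlyOn_add_div_pow {X : Type*} (n : ℕ) (ρ : ℝ) (S : Set X) :
    TendstoBoundedlyOn (fun t (p : ℝ × X) => ((t + p.1) / t) ^ n) (fun _ => 1)
      atTop (Icc (-ρ) ρ ×ˢ S) where
  bounded := by
    refine ⟨(1 + ρ) ^ n, ?_⟩
    filter_upwards [eventually_ge_atTop 1] with t ht p hp
    have hpρ : |p.1| ≤ ρ := abs_le.2 hp.1
    have ht₀ : 0 < t := one_pos.trans_le ht
    rw [abs_pow, abs_div, abs_of_pos ht₀]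
    refine pow_le_pow_left₀ (by positivity) ((div_le_iff₀ ht₀).2 ?_) n
    calc |t + p.1| ≤ |t| + |p.1| := abs_add_le _ _
      _ ≤ (1 + ρ) * t := by rw [abs_of_pos ht₀]; nlinarith [abs_nonneg p.1]
  tendsto p _ := by
    have h : Tendsto (fun t : ℝ => (1 + p.1 / t) ^ n) atTop (nhds ((1 + 0) ^ n)) :=
      (tendsto_const_nhds.add (tendsto_const_nhds.div_atTop tendsto_id)).pow n
    rw [add_zero, one_pow] at h
    refine h.congr' ?_
    filter_upwards [eventually_ne_atTop 0] with t ht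
    rw [add_div, div_self ht]

variable {E : Type*} [NormedAddCommGroup E] [InnerProductSpace ℝ E] {ι : Type*} [Fintype ι]
  {b : OrthonormalBasis ι ℝ E} {U : ℝ × E → ℝ}

theorem laplacianAlong_zero (e : ι → E) : laplacianAlong e (fun _ => 0) = fun _ => 0 := by
  simpa using laplacianAlong_const_mul (e := e) 0 fun _ => 0

theorem slice_dirDeriv_dirDeriv (hU : ContDiff ℝ ∞ U) (v : E) (t : ℝ) :
    (fun y => dirDeriv (1, 0) (dirDeriv (0, v) U) (t, y)) =
      dirDeriv v fun y => dirDeriv (1, 0) U (t, y) := by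
  rw [dirDeriv_comm (contDiff_infty.1 hU 2),
    dirDeriv_slice ((contDiff_dirDeriv hU _).differentiable (by simp))]

theorem IsWaveSolution.slice_dirDeriv_dirDeriv_time (hU : IsWaveSolution b U) (t : ℝ) :
    (fun y => dirDeriv (1, 0) (dirDeriv (1, 0) U) (t, y)) =
      laplacianAlong b fun y => U (t, y) := by
  rw [hU.wave_eq, laplacianAlong_slice hU.contDiff]

variable [FiniteDimensional ℝ E] [MeasurableSpace E] [BorelSpace E] {k : ℕ}

theorem radiationField_neg_neg_sq_of_position_eq_zero (hU : ContDiff ℝ ∞ U)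
    (hpos : ∀ x, U (0, x) = 0) (hvel : HasCompactSupport fun x => dirDeriv (1, 0) U (0, x))
    (hmean : HasVanishingMoments 1 fun x => dirDeriv (1, 0) U (0, x)) (s : ℝ) (θ : E) :
    radiationField b k U (-s) (-θ) ^ 2 = radiationField b k U s θ ^ 2 := by
  have hB := contDiff_slice (contDiff_dirDeriv hU (1, 0)) 0
  simp only [radiationField, hpos, Function.iterate_fixed (laplacianAlong_zero b), mul_pow]
  simp only [halfSpaceMoment, mul_zero, integral_zero, add_zero]
  congr 2
  exact halfSpaceMoment_neg_neg_sq (contDiff_iterate_laplacianAlong hB (k + 1)).continuous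
    (hvel.mono' (subset_closure.trans (tsupport_iterate_laplacianAlong_subset _ _)))
    (hasVanishingMoments_iterate_laplacianAlong hB hvel hmean (k + 1)) (by omega) (by omega) s θ

theorem radiationField_neg_neg_sq_of_velocity_eq_zero (hU : ContDiff ℝ ∞ U)
    (hpos : HasCompactSupport fun x => U (0, x)) (hvel : ∀ x, dirDeriv (1, 0) U (0, x) = 0)
    (s : ℝ) (θ : E) :
    radiationField b k U (-s) (-θ) ^ 2 = radiationField b k U s θ ^ 2 := by
  have hA := contDiff_slice hU 0
  simp only [radiationField, hvel, Function.iterate_fixed (laplacianAlong_zero b), mul_pow]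
  simp only [halfSpaceMoment, mul_zero, integral_zero, zero_add]
  congr 2
  exact halfSpaceMoment_neg_neg_sq (contDiff_iterate_laplacianAlong hA (k + 2)).continuous
    (hpos.mono' (subset_closure.trans (tsupport_iterate_laplacianAlong_subset _ _)))
    (hasVanishingMoments_iterate_laplacianAlong hA hpos (hasVanishingMoments_zero _) (k + 2))
    (by omega) (by omega) s θ

/-- Twice the energy radiated along the rays `t ↦ (t + s) • θ`, as a density in `(s, θ)`. -/
def radiatedEnergy (b : OrthonormalBasis ι ℝ E) (k : ℕ) (U : ℝ × E → ℝ) (s : ℝ) (θ : E) : ℝ :=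
  ∑ i, radiationField b k (dirDeriv (0, b i) U) s θ ^ 2 +
    radiationField b k (dirDeriv (1, 0) U) s θ ^ 2

namespace IsWaveSolution

theorem radiatedEnergy_neg_neg (hU : IsWaveSolution b U) (hpos : ∀ x, U (0, x) = 0)
    (hvel : HasCompactSupport fun x => dirDeriv (1, 0) U (0, x)) (s : ℝ) (θ : E) :
    radiatedEnergy b k U (-s) (-θ) = radiatedEnergy b k U s θ := by
  have hvel_smooth := contDiff_slice (hU.dirDeriv (1, 0)).contDiff 0
  rw [radiatedEnergy, radiatedEnergy]
  congr 1
  · refine Finset.sum_congr rfl fun i _ => ?_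
    have hvel_i := slice_dirDeriv_dirDeriv hU.contDiff (b i) 0
    refine radiationField_neg_neg_sq_of_position_eq_zero (hU.dirDeriv _).contDiff
      (fun x => ?_) ?_ ?_ s θ
    · rw [← congrFun (dirDeriv_slice hU.differentiable (b i) 0) x, funext hpos]
      simp [dirDeriv]
    · rw [hvel_i]
      exact hvel.mono' (subset_closure.trans (tsupport_dirDeriv_subset _ _))
    · rw [hvel_i]
      exact hasVanishingMoments_dirDeriv (hvel_smooth.of_le (by simp)) hvel
        (hasVanishingMoments_zero _) _
  · refine radiationField_neg_neg_sq_of_velocity_eq_zero (hU.dirDeriv _).contDiff hvel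
      (fun x => ?_) s θ
    rw [congrFun (hU.slice_dirDeriv_dirDeriv_time 0) x, funext hpos, laplacianAlong_zero]

theorem tendstoBoundedlyOn_radiatedEnergy (hU : IsWaveSolution b U)
    (hk : Module.finrank ℝ E = 2 * k + 1) (hpos : HasCompactSupport fun x => U (0, x))
    (hvel : HasCompactSupport fun x => dirDeriv (1, 0) U (0, x)) (ρ : ℝ) :
    TendstoBoundedlyOn
      (fun t (p : ℝ × E) => (t + p.1) ^ (2 * k) * energyDensity b U (t, (t + p.1) • p.2))
      (fun p => radiatedEnergy b k U p.1 p.2) atTop (Icc (-ρ) ρ ×ˢ sphere 0 1) := by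
  have square {V : ℝ × E → ℝ} (hV : IsWaveSolution b V)
      (hVpos : HasCompactSupport fun x => V (0, x))
      (hVvel : HasCompactSupport fun x => dirDeriv (1, 0) V (0, x)) :=
    have h := hV.tendstoBoundedlyOn_radiationField hk hVpos hVvel ρ
    h.mul h
  have spatial (i : ι) := square (hU.dirDeriv (0, b i))
    (by
      rw [← dirDeriv_slice hU.differentiable]
      exact hpos.mono' (subset_closure.trans (tsupport_dirDeriv_subset _ _)))
    (by
      rw [slice_dirDeriv_dirDeriv hU.contDiff]
      exact hvel.mono' (subset_closure.trans (tsupport_dirDeriv_subset _ _)))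
  have temporal := square (hU.dirDeriv (1, 0)) hvel
    (by
      rw [hU.slice_dirDeriv_dirDeriv_time]
      exact hpos.mono' (subset_closure.trans (tsupport_laplacianAlong_subset _)))
  refine ((tendstoBoundedlyOn_add_div_pow (2 * k) ρ (sphere 0 1)).mul
    ((TendstoBoundedlyOn.sum fun i (_ : i ∈ Finset.univ) => spatial i).add temporal)).congr ?_
    fun p _ => by simp only [radiatedEnergy, one_mul, sq]
  filter_upwards [eventually_ne_atTop 0] with t ht p _
  rw [energyDensity, div_pow, mul_add, mul_add, Finset.mul_sum, Finset.mul_sum]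
  congr 1
  · refine Finset.sum_congr rfl fun i _ => ?_
    field_simp
    ring
  · field_simp
    ring

end IsWaveSolution

end RadiatedEnergy

section PolarCoordinates

variable {E : Type*} [NormedAddCommGroup E] [NormedSpace ℝ E] [FiniteDimensional ℝ E]
  [Nontrivial E] [MeasurableSpace E] [BorelSpace E] (μ : Measure E) [μ.IsAddHaarMeasure]
  {F : Type*} [NormedAddCommGroup F] [NormedSpace ℝ F]

theorem integral_eq_integral_toSphere_prod (h : E → F) :
    ∫ x, h x ∂μ = ∫ p in univ ×ˢ Ioi (0 : ℝ),
      p.2 ^ (Module.finrank ℝ E - 1) • h (p.2 • (p.1 : E)) ∂μ.toSphere.prod volume := by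
  have : SigmaFinite (Measure.comap ((↑) : Ioi (0 : ℝ) → ℝ) volume) :=
    .of_map _ measurable_subtype_coe.aemeasurable
      (by rw [map_comap_subtype_coe measurableSet_Ioi]; infer_instance)
  have subtype_val_preserving : MeasurePreserving
      (Prod.map id Subtype.val : sphere (0 : E) 1 × Ioi (0 : ℝ) → sphere (0 : E) 1 × ℝ)
      (μ.toSphere.prod (.comap Subtype.val volume))
      ((μ.toSphere.prod volume).restrict (univ ×ˢ Ioi 0)) := by
    rw [← Measure.prod_restrict, Measure.restrict_univ]
    exact (MeasurePreserving.id _).prod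
      ⟨measurable_subtype_coe, map_comap_subtype_coe measurableSet_Ioi volume⟩
  have embedding : MeasurableEmbedding
      (Prod.map id Subtype.val : sphere (0 : E) 1 × Ioi (0 : ℝ) → sphere (0 : E) 1 × ℝ) :=
    MeasurableEmbedding.id.prodMap (.subtype_coe measurableSet_Ioi)
  calc ∫ x, h x ∂μ
      = ∫ x : ({0}ᶜ : Set E), h x ∂μ.comap Subtype.val := by
        rw [integral_subtype_comap (measurableSet_singleton _).compl, restrict_compl_singleton]
    _ = ∫ p : sphere (0 : E) 1 × Ioi (0 : ℝ), h (p.2.1 • p.1.1)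
          ∂μ.toSphere.prod (.volumeIoiPow (Module.finrank ℝ E - 1)) := by
        rw [← μ.measurePreserving_homeomorphUnitSphereProd.integral_comp
          (Homeomorph.measurableEmbedding _)]
        refine integral_congr_ae (.of_forall fun x => ?_)
        simp [smul_smul, mul_inv_cancel₀ (norm_ne_zero_iff.2 x.2)]
    _ = ∫ p : sphere (0 : E) 1 × Ioi (0 : ℝ),
          p.2.1 ^ (Module.finrank ℝ E - 1) • h (p.2.1 • p.1.1)
          ∂μ.toSphere.prod (.comap Subtype.val volume) := by
        rw [Measure.volumeIoiPow, prod_withDensity_right (by fun_prop),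
          integral_withDensity_eq_integral_toReal_smul (by fun_prop) (by simp)]
        refine integral_congr_ae (.of_forall fun p => ?_)
        simp only [ENNReal.toReal_ofReal (pow_nonneg (le_of_lt p.2.2) _)]
    _ = _ := subtype_val_preserving.integral_comp embedding
          fun p => p.2 ^ (Module.finrank ℝ E - 1) • h (p.2 • (p.1 : E))

theorem setIntegral_norm_sub_mem_eq_integral_toSphere_prod (h : E → F) {J : Set ℝ}
    (hJ : MeasurableSet J) {t : ℝ} (ht : ∀ s ∈ J, 0 < t + s) :
    ∫ x in {x | ‖x‖ - t ∈ J}, h x ∂μ = ∫ p in univ ×ˢ J,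
      (t + p.2) ^ (Module.finrank ℝ E - 1) • h ((t + p.2) • (p.1 : E))
        ∂μ.toSphere.prod volume := by
  have translation : MeasurePreserving (Prod.map id (t + ·)) (μ.toSphere.prod volume)
      (μ.toSphere.prod volume) :=
    (MeasurePreserving.id _).prod (measurePreserving_add_left volume t)
  have embedding : MeasurableEmbedding
      (Prod.map id (t + ·) : sphere (0 : E) 1 × ℝ → sphere (0 : E) 1 × ℝ) :=
    MeasurableEmbedding.id.prodMap (measurableEmbedding_addLeft t)
  have hJt : MeasurableSet {r : ℝ | r - t ∈ J} := hJ.preimage (measurable_sub_const t)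
  have hJt_pos {r : ℝ} (hr : r - t ∈ J) : 0 < r := by simpa using ht _ hr
  have hJ_norm : MeasurableSet {x : E | ‖x‖ - t ∈ J} := hJt.preimage measurable_norm
  rw [← integral_indicator hJ_norm, integral_eq_integral_toSphere_prod]
  calc _ = ∫ p in univ ×ˢ {r : ℝ | r - t ∈ J},
          p.2 ^ (Module.finrank ℝ E - 1) • h (p.2 • (p.1 : E)) ∂μ.toSphere.prod volume := by
        rw [← integral_indicator (.prod .univ measurableSet_Ioi),
          ← integral_indicator (.prod .univ hJt)]
        refine integral_congr_ae (.of_forall fun p => ?_)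
        by_cases hp : 0 < p.2
        · have hnorm : ‖p.2 • (p.1 : E)‖ = p.2 := by simp [norm_smul, abs_of_pos hp]
          by_cases hpJ : p.2 - t ∈ J <;> simp [hp, hnorm, hpJ]
        · simp [hp, mt hJt_pos hp]
    _ = _ := by
        rw [← translation.setIntegral_preimage_emb embedding]
        congr 2
        ext p
        simp

theorem tendsto_setIntegral_norm_sub_mem {F : ℝ → E → ℝ} {L : ℝ → E → ℝ} {J : Set ℝ} {ρ : ℝ}
    (hJ : MeasurableSet J) (hJρ : J ⊆ Icc (-ρ) ρ) (hF : ∀ t, Continuous (F t))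
    (hFL : TendstoBoundedlyOn
      (fun t (p : ℝ × E) => (t + p.1) ^ (Module.finrank ℝ E - 1) * F t ((t + p.1) • p.2))
      (fun p => L p.1 p.2) atTop (Icc (-ρ) ρ ×ˢ sphere 0 1)) :
    Tendsto (fun t => ∫ x in {x | ‖x‖ - t ∈ J}, F t x ∂μ) atTop
      (nhds (∫ p in univ ×ˢ J, L p.2 p.1 ∂μ.toSphere.prod volume)) := by
  have : IsFiniteMeasure (volume.restrict J) :=
    isFiniteMeasure_restrict.2 (measure_ne_top_of_subset hJρ (by simp))
  have polar : (fun t => ∫ p in univ ×ˢ J,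
        (t + p.2) ^ (Module.finrank ℝ E - 1) * F t ((t + p.2) • (p.1 : E))
          ∂μ.toSphere.prod volume) =ᶠ[atTop] fun t => ∫ x in {x | ‖x‖ - t ∈ J}, F t x ∂μ := by
    filter_upwards [eventually_gt_atTop ρ] with t ht
    exact (setIntegral_norm_sub_mem_eq_integral_toSphere_prod μ (F t) hJ
      fun s hs => by linarith [(hJρ hs).1]).symm
  have ae_mem : ∀ᵐ p ∂μ.toSphere.prod volume |>.restrict (univ ×ˢ J),
      (p.2, (p.1 : E)) ∈ Icc (-ρ) ρ ×ˢ sphere (0 : E) 1 := by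
    filter_upwards [ae_restrict_mem (.prod .univ hJ)] with p hp using ⟨hJρ hp.2, p.1.2⟩
  refine Tendsto.congr' polar ?_
  rw [← Measure.prod_restrict, Measure.restrict_univ] at ae_mem ⊢
  obtain ⟨C, hC⟩ := hFL.bounded
  refine tendsto_integral_filter_of_norm_le_const (.of_forall fun t => ?_) ⟨C, ?_⟩ ?_
  · have := hF t
    exact (by fun_prop : Continuous _).aestronglyMeasurable
  · filter_upwards [hC] with t ht
    filter_upwards [ae_mem] with p hp using ht _ hp
  · filter_upwards [ae_mem] with p hp using hFL.tendsto _ hp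

end PolarCoordinates

section EnergyPartition

theorem TendstoBoundedlyOn.comp {α X Y : Type*} {F : α → X → ℝ} {L : X → ℝ} {l : Filter α}
    {S : Set X} {T : Set Y} {φ : Y → X} (h : TendstoBoundedlyOn F L l S) (hφ : MapsTo φ T S) :
    TendstoBoundedlyOn (fun t y => F t (φ y)) (fun y => L (φ y)) l T where
  bounded := h.bounded.imp fun _ hC => hC.mono fun _ ht _ hy => ht _ (hφ hy)
  tendsto _ hy := h.tendsto _ (hφ hy)

theorem setIntegral_univ_prod_Ico_comp_neg {X F : Type*} [MeasurableSpace X]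
    [NormedAddCommGroup F] [NormedSpace ℝ F] (σ : Measure X) [SFinite σ] (f : X → ℝ → F) (R : ℝ) :
    ∫ p in univ ×ˢ Ico (-R) 0, f p.1 (-p.2) ∂σ.prod volume =
      ∫ p in univ ×ˢ Icc 0 R, f p.1 p.2 ∂σ.prod volume := by
  have reflection : MeasurePreserving (Prod.map id Neg.neg : X × ℝ → X × ℝ)
      (σ.prod volume) (σ.prod volume) :=
    (MeasurePreserving.id _).prod (Measure.measurePreserving_neg volume)
  have embedding : MeasurableEmbedding (Prod.map id Neg.neg : X × ℝ → X × ℝ) :=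
    MeasurableEmbedding.id.prodMap (MeasurableEquiv.neg ℝ).measurableEmbedding
  have preimage : Prod.map id Neg.neg ⁻¹' univ ×ˢ Ioc 0 R = (univ : Set X) ×ˢ Ico (-R) 0 := by
    ext p
    simp [neg_le, and_comm]
  calc _ = ∫ p in univ ×ˢ Ioc 0 R, f p.1 p.2 ∂σ.prod volume := by
        rw [← preimage]
        exact reflection.setIntegral_preimage_emb embedding (fun p => f p.1 p.2) _
    _ = _ := setIntegral_congr_set (Measure.set_prod_ae_eq (ae_eq_refl _) Ioc_ae_eq_Icc)

variable {E : Type*} [NormedAddCommGroup E] [InnerProductSpace ℝ E] [FiniteDimensional ℝ E]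
  [MeasurableSpace E] [BorelSpace E] {ι : Type*} [Fintype ι] {b : OrthonormalBasis ι ℝ E}
  {U : ℝ × E → ℝ} {R : ℝ} {k : ℕ}

namespace IsWaveSolution

theorem tendstoBoundedlyOn_energyDensity (hU : IsWaveSolution b U) (hpos : ∀ x, U (0, x) = 0)
    (hvel : tsupport (fun x => dirDeriv (1, 0) U (0, x)) ⊆ closedBall 0 R)
    (hk : Module.finrank ℝ E = 2 * k + 1) (ρ : ℝ) :
    TendstoBoundedlyOn (fun t (p : ℝ × E) =>
        (t + p.1) ^ (Module.finrank ℝ E - 1) * energyDensity b U (t, (t + p.1) • p.2))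
      (fun p => radiatedEnergy b k U p.1 p.2) atTop (Icc (-ρ) ρ ×ˢ sphere 0 1) := by
  rw [hk, Nat.add_sub_cancel]
  refine hU.tendstoBoundedlyOn_radiatedEnergy hk ?_
    ((isCompact_closedBall 0 R).of_isClosed_subset isClosed_closure hvel) ρ
  simp only [hpos]
  exact HasCompactSupport.zero

theorem tendsto_setIntegral_energyDensity_exterior [Nontrivial E] (hU : IsWaveSolution b U)
    (hpos : ∀ x, U (0, x) = 0)
    (hvel : tsupport (fun x => dirDeriv (1, 0) U (0, x)) ⊆ closedBall 0 R)
    (hk : Module.finrank ℝ E = 2 * k + 1) :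
    Tendsto (fun t => ∫ x in {x | t ≤ ‖x‖}, energyDensity b U (t, x)) atTop
      (nhds (∫ p in univ ×ˢ Icc 0 R, radiatedEnergy b k U p.2 p.1
        ∂(volume : Measure E).toSphere.prod volume)) := by
  have hcont := continuous_energyDensity (b := b) hU.contDiff
  have shell := tendsto_setIntegral_norm_sub_mem (F := fun t x => energyDensity b U (t, x))
    (L := radiatedEnergy b k U) volume measurableSet_Icc
    (fun s (hs : s ∈ Icc 0 R) => ⟨by linarith [hs.1, hs.2], hs.2⟩) (fun t => by fun_prop)
    (hU.tendstoBoundedlyOn_energyDensity hpos hvel hk R)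
  refine shell.congr' ?_
  filter_upwards [eventually_ge_atTop 0] with t ht
  refine (setIntegral_eq_of_subset_of_forall_sdiff_eq_zero
    (measurableSet_le measurable_const measurable_norm) (fun x hx => sub_nonneg.1 hx.1)
    fun x hx => energyDensity_eq_zero fun v => ?_).symm
  refine hU.dirDeriv_eq_zero_of_far hpos hvel ⟨k, hk⟩ v ?_
  by_contra! h
  rw [abs_of_nonneg ht] at h
  exact hx.2 ⟨sub_nonneg.2 hx.1, by linarith⟩

theorem tendsto_setIntegral_energyDensity_interior [Nontrivial E] (hU : IsWaveSolution b U)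
    (hpos : ∀ x, U (0, x) = 0)
    (hvel : tsupport (fun x => dirDeriv (1, 0) U (0, x)) ⊆ closedBall 0 R) (hR : 0 ≤ R)
    (hk : Module.finrank ℝ E = 2 * k + 1) :
    Tendsto (fun t => ∫ x in {x | ‖x‖ < t}, energyDensity b U (t, x)) atTop
      (nhds (∫ p in univ ×ˢ Icc 0 R, radiatedEnergy b k U p.2 p.1
        ∂(volume : Measure E).toSphere.prod volume)) := by
  have hcont := continuous_energyDensity (b := b) hU.contDiff
  have hvel_compact : HasCompactSupport fun x => dirDeriv (1, 0) U (0, x) :=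
    (isCompact_closedBall 0 R).of_isClosed_subset isClosed_closure hvel
  have antipodal : MapsTo (Prod.map id Neg.neg : ℝ × E → ℝ × E)
      (Icc (-R) R ×ˢ sphere 0 1) (Icc (-R) R ×ˢ sphere 0 1) :=
    fun p hp => ⟨hp.1, by simpa using hp.2⟩
  have shell := tendsto_setIntegral_norm_sub_mem (F := fun t x => energyDensity b U (t, -x))
    (L := fun s θ => radiatedEnergy b k U s (-θ)) volume measurableSet_Ico
    (fun s (hs : s ∈ Ico (-R) 0) => ⟨hs.1, hs.2.le.trans hR⟩) (fun t => by fun_prop)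
    (by
      simpa using (hU.tendstoBoundedlyOn_energyDensity hpos hvel hk R).comp antipodal)
  have limit := setIntegral_univ_prod_Ico_comp_neg (volume : Measure E).toSphere
    (fun θ s => radiatedEnergy b k U s θ) R
  simp only [← hU.radiatedEnergy_neg_neg hpos hvel_compact (- _), neg_neg] at limit
  rw [limit] at shell
  refine shell.congr fun t => ?_
  calc ∫ x in {x | ‖x‖ - t ∈ Ico (-R) 0}, energyDensity b U (t, -x)
      = ∫ x in {x | ‖x‖ - t ∈ Ico (-R) 0}, energyDensity b U (t, x) := by
        simpa using (Measure.measurePreserving_neg (volume : Measure E)).setIntegral_preimage_emb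
          (MeasurableEquiv.neg E).measurableEmbedding (fun x => energyDensity b U (t, x))
          {x | ‖x‖ - t ∈ Ico (-R) 0}
    _ = _ := by
        refine (setIntegral_eq_of_subset_of_forall_sdiff_eq_zero
          (measurableSet_lt measurable_norm measurable_const) (fun x hx => sub_neg.1 hx.2)
          fun x hx => energyDensity_eq_zero fun v => ?_).symm
        refine hU.dirDeriv_eq_zero_of_near hpos hvel hR ⟨k, hk⟩ v ?_
        by_contra! h
        exact hx.2 ⟨by linarith, sub_neg.2 hx.1⟩

theorem tendsto_setIntegral_energyDensity (hU : IsWaveSolution b U) (hpos : ∀ x, U (0, x) = 0)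
    (hvel : HasCompactSupport fun x => dirDeriv (1, 0) U (0, x))
    (hodd : Odd (Module.finrank ℝ E)) :
    Tendsto (fun t => ∫ x in {x | t ≤ ‖x‖}, energyDensity b U (t, x)) atTop
      (nhds (1 / 2 * ∫ x, dirDeriv (1, 0) U (0, x) ^ 2)) := by
  obtain ⟨k, hk⟩ := hodd
  have : Nontrivial E := Module.nontrivial_of_finrank_pos (R := ℝ) (by omega)
  obtain ⟨R, hR, hvelR⟩ := hvel.isBounded.subset_closedBall_lt 0 0
  have hfar (v : ℝ × E) (t : ℝ) (x : E) (hx : |t| + R < ‖x‖) : dirDeriv v U (t, x) = 0 :=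
    hU.dirDeriv_eq_zero_of_far hpos hvelR ⟨k, hk⟩ v hx
  have integrable (t : ℝ) : Integrable fun x => energyDensity b U (t, x) := by
    have hcont := continuous_energyDensity (b := b) hU.contDiff
    refine (by fun_prop : Continuous _).integrable_of_hasCompactSupport
      (.intro (isCompact_closedBall (0 : E) (|t| + R)) fun x hx => ?_)
    exact energyDensity_eq_zero fun v => hfar v t x (by simpa using hx)
  have exterior := hU.tendsto_setIntegral_energyDensity_exterior hpos hvelR hk
  have interior := hU.tendsto_setIntegral_energyDensity_interior hpos hvelR hR.le hk
  have total := exterior.add interior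
  have conservation (t : ℝ) : (∫ x in {x | t ≤ ‖x‖}, energyDensity b U (t, x)) +
      ∫ x in {x | ‖x‖ < t}, energyDensity b U (t, x) = ∫ x, dirDeriv (1, 0) U (0, x) ^ 2 := by
    rw [← hU.integral_energyDensity_of_position_eq_zero hpos hfar t]
    simpa [compl_ofPred] using integral_add_compl
      (measurableSet_le measurable_const measurable_norm : MeasurableSet {x : E | t ≤ ‖x‖})
      (integrable t)
  simp only [conservation, tendsto_const_nhds_iff] at total
  convert exterior using 2
  linear_combination 1 / 2 * total

end IsWaveSolution

end EnergyPartition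

section ExteriorEnergy

variable {E : Type*} [NormedAddCommGroup E] [InnerProductSpace ℝ E] {ι : Type*}
  [Fintype ι] {u : ℝ → E → ℝ}

theorem dirDeriv_time_uncurry (hu : ContDiff ℝ ∞ fun p : ℝ × E => u p.1 p.2) (t : ℝ) (x : E) :
    dirDeriv (1, 0) (fun p : ℝ × E => u p.1 p.2) (t, x) = deriv (fun s => u s x) t :=
  (hasDerivAt_time_slice (hu.differentiable (by simp)) t x).deriv.symm

variable [FiniteDimensional ℝ E]

theorem norm_gradient_sq (b : OrthonormalBasis ι ℝ E) (f : E → ℝ) (x : E) :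
    ‖gradient f x‖ ^ 2 = ∑ i, dirDeriv (b i) f x ^ 2 := by
  simp only [← b.sum_sq_inner_left, inner_gradient_left, dirDeriv]

theorem laplacian_eq_laplacianAlong (b : OrthonormalBasis ι ℝ E) {f : E → ℝ}
    (hf : ContDiff ℝ 2 f) : Laplacian.laplacian f = laplacianAlong b f := by
  ext x
  simp [InnerProductSpace.laplacian_eq_iteratedFDeriv_orthonormalBasis f b, laplacianAlong,
    dirDeriv_dirDeriv_apply hf, iteratedFDeriv_two_apply]

theorem sum_d2_eq_laplacian {N : ℕ} {f : EuclideanSpace ℝ (Fin N) → ℝ} (hf : ContDiff ℝ 2 f) :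
    (fun x => ∑ j, d2 f j x) = Laplacian.laplacian f := by
  ext x
  rw [laplacian_eq_laplacianAlong (EuclideanSpace.basisFun (Fin N) ℝ) hf, laplacianAlong]
  simp only [EuclideanSpace.basisFun_apply]
  rfl

theorem isWaveSolution_uncurry (b : OrthonormalBasis ι ℝ E)
    (hu : ContDiff ℝ ∞ fun p : ℝ × E => u p.1 p.2)
    (hwave : ∀ t x, deriv (fun s => deriv (fun r => u r x) s) t = Laplacian.laplacian (u t) x) :
    IsWaveSolution b fun p => u p.1 p.2 where
  contDiff := hu
  wave_eq := by
    ext ⟨t, x⟩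
    have hslice : ContDiff ℝ 2 (u t) := contDiff_infty.1 (contDiff_slice hu t) 2
    have hdt := (contDiff_dirDeriv hu (1, 0)).differentiable (by simp)
    rw [← congrFun (laplacianAlong_slice hu b t) x, ← laplacian_eq_laplacianAlong b hslice,
      ← hwave, ← (hasDerivAt_time_slice hdt t x).deriv]
    simp only [dirDeriv_time_uncurry hu]

theorem energyDensity_uncurry (b : OrthonormalBasis ι ℝ E)
    (hu : ContDiff ℝ ∞ fun p : ℝ × E => u p.1 p.2) (t : ℝ) (x : E) :
    energyDensity b (fun p => u p.1 p.2) (t, x) =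
      ‖gradient (u t) x‖ ^ 2 + deriv (fun s => u s x) t ^ 2 := by
  rw [energyDensity, norm_gradient_sq b, dirDeriv_time_uncurry hu]
  simp only [← congrFun (dirDeriv_slice (hu.differentiable (by simp)) _ t) x]

variable [MeasurableSpace E] [BorelSpace E]

/-- The exterior energy `Ext(t)`: the energy of `u` at time `t` outside the light cone. -/
def exteriorEnergy (u : ℝ → E → ℝ) (t : ℝ) : ℝ :=
  (1 / 2) * ∫ x in {x : E | |t| ≤ ‖x‖},
    (‖gradient (u t) x‖ ^ 2 + (deriv (fun s => u s x) t) ^ 2)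

theorem exteriorEnergy_comp_neg (u : ℝ → E → ℝ) (t : ℝ) :
    exteriorEnergy (fun s => u (-s)) t = exteriorEnergy u (-t) := by
  simp only [exteriorEnergy, abs_neg, fun x => deriv_comp_neg (fun s => u s x) t, neg_sq]

theorem tendsto_exteriorEnergy_atTop (hodd : Odd (Module.finrank ℝ E)) {u₁ : E → ℝ}
    (hu₁ : HasCompactSupport u₁) (hu : ContDiff ℝ ∞ fun p : ℝ × E => u p.1 p.2)
    (hwave : ∀ t x, deriv (fun s => deriv (fun r => u r x) s) t = Laplacian.laplacian (u t) x)
    (hinit0 : ∀ x, u 0 x = 0) (hinit1 : ∀ x, deriv (fun s => u s x) 0 = u₁ x) :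
    Tendsto (exteriorEnergy u) atTop (nhds ((1 / 4) * ∫ x, u₁ x ^ 2)) := by
  have hU := isWaveSolution_uncurry (stdOrthonormalBasis ℝ E) hu hwave
  have hvel (x : E) : dirDeriv (1, 0) (fun p : ℝ × E => u p.1 p.2) (0, x) = u₁ x := by
    rw [dirDeriv_time_uncurry hu, hinit1]
  have limit := (hU.tendsto_setIntegral_energyDensity hinit0
    (by simpa only [hvel] using hu₁) hodd).const_mul (1 / 2)
  simp only [hvel, energyDensity_uncurry _ hu] at limit
  rw [show (1 / 4 : ℝ) = 1 / 2 * (1 / 2) by norm_num, mul_assoc]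
  refine limit.congr' ?_
  filter_upwards [eventually_ge_atTop 0] with t ht
  rw [exteriorEnergy, abs_of_nonneg ht]

theorem stmt13_general (hodd : Odd (Module.finrank ℝ E)) {u₁ : E → ℝ}
    (hu₁ : HasCompactSupport u₁) (hu : ContDiff ℝ ∞ fun p : ℝ × E => u p.1 p.2)
    (hwave : ∀ t x, deriv (fun s => deriv (fun r => u r x) s) t = Laplacian.laplacian (u t) x)
    (hinit0 : ∀ x, u 0 x = 0) (hinit1 : ∀ x, deriv (fun s => u s x) 0 = u₁ x) :
    Tendsto (exteriorEnergy u) atTop (nhds ((1 / 4) * ∫ x, u₁ x ^ 2)) ∧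
      Tendsto (exteriorEnergy u) atBot (nhds ((1 / 4) * ∫ x, u₁ x ^ 2)) := by
  refine ⟨tendsto_exteriorEnergy_atTop hodd hu₁ hu hwave hinit0 hinit1, ?_⟩
  have reversed := tendsto_exteriorEnergy_atTop (u := fun t => u (-t)) (u₁ := -u₁) hodd hu₁.neg
    (hu.comp (contDiff_fst.neg.prodMk contDiff_snd))
    (fun t x => by
      simp only [fun s => deriv_comp_neg (fun r => u r x) s, deriv.fun_neg,
        deriv_comp_neg (fun s => deriv (fun r => u r x) s), neg_neg, hwave])
    (fun x => by simp only [neg_zero, hinit0])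
    (fun x => by simp only [deriv_comp_neg (fun s => u s x), neg_zero, hinit1, Pi.neg_apply])
  simpa [Function.comp_def, exteriorEnergy_comp_neg] using reversed.comp tendsto_neg_atBot_atTop

end ExteriorEnergy

/-- Lemma 2.8, second identity: for data `(0, u₁)` supported in the unit ball, the
exterior energy converges to one quarter of `∫u₁²` at `±∞`. -/
theorem stmt13 (N : ℕ) (hN : 3 ≤ N) (hodd : Odd N)
    (u₁ : EuclideanSpace ℝ (Fin N) → ℝ)
    (hu₁ : ContDiff ℝ (⊤ : ℕ∞) u₁) (hu₁c : HasCompactSupport u₁)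
    (hu₁s : Function.support u₁ ⊆ Metric.closedBall 0 1)
    (u : ℝ → EuclideanSpace ℝ (Fin N) → ℝ)
    (hu : ContDiff ℝ (⊤ : ℕ∞) (fun p : ℝ × EuclideanSpace ℝ (Fin N) => u p.1 p.2))
    (hwave : ∀ t x, deriv (fun s => deriv (fun r => u r x) s) t = ∑ j, d2 (u t) j x)
    (hinit0 : ∀ x, u 0 x = 0)
    (hinit1 : ∀ x, deriv (fun s => u s x) 0 = u₁ x) :
    Tendsto (fun t : ℝ =>
        (1 / 2) * ∫ x in {x : EuclideanSpace ℝ (Fin N) | |t| ≤ ‖x‖},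
          (‖gradient (u t) x‖ ^ 2 + (deriv (fun s => u s x) t) ^ 2))
      atTop (nhds ((1 / 4) * ∫ x, u₁ x ^ 2))
    ∧ Tendsto (fun t : ℝ =>
        (1 / 2) * ∫ x in {x : EuclideanSpace ℝ (Fin N) | |t| ≤ ‖x‖},
          (‖gradient (u t) x‖ ^ 2 + (deriv (fun s => u s x) t) ^ 2))
      atBot (nhds ((1 / 4) * ∫ x, u₁ x ^ 2)) :=
  stmt13_general (by rwa [finrank_euclideanSpace_fin]) hu₁c hu
    (fun t x => (hwave t x).trans <|
      congrFun (sum_d2_eq_laplacian (contDiff_infty.1 (contDiff_slice hu t) 2)) x) hinit0 hinit1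

end
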